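/- Let b ≥ 0 be a constant and suppose u : ℝ^n → ℝ is a smooth convex function satisfying Δu + b·det(D²u) = 1 on all of ℝ^n. Then u is a quadratic polynomial; equivalently, the Hessian D²u is a constant matrix. -/

import Mathlib

/-- The Hessian matrix `D²u(x)` of `u : ℝⁿ → ℝ` at `x`, with entries `∂_i ∂_j u(x)`. -/
noncomputable def Hess (n : ℕ) (u : EuclideanSpace ℝ (Fin n) → ℝ)
    (x : EuclideanSpace ℝ (Fin n)) : Matrix (Fin n) (Fin n) ℝ :=
  Matrix.of fun i j =>
    iteratedFDeriv ℝ 2 u x ![EuclideanSpace.single i 1, EuclideanSpace.single j 1]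

/-!
Let `K` be the compact set of matrices `A ≥ 0` with `tr A + b det A = 1`, which contains every
value of `D²u`. The linearization of the equation has the coefficients `a = 1 + b adj (D²u)`; they
are uniformly elliptic, and divergence free by the Piola identity. Hence `L = ∑ aᵢⱼ ∂ᵢ∂ⱼ` is also
in divergence form, and Moser iteration gives a weak Harnack inequality for its nonnegative
supersolutions. Differentiating the equation twice shows that for small `δ > 0` all the functions
`w e = eᵀ (D²u + δ)⁻¹ e` satisfy `L (w e) ≥ 0`, so that `sup (w e) - w e` is a nonnegative
supersolution with infimum `0`. By the weak Harnack inequality it is small on most of a large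
ball; therefore finitely many of the `w e` come close to their suprema at a common point, and by
compactness there is `m ∈ K` with `w e ≤ eᵀ (m + δ)⁻¹ e` everywhere, for all `e`. Inversion
reverses the order of positive definite matrices, so `D²u ≥ m`. As `tr A + b det A` increases with
`A`, strictly because of the trace, and takes the value `1` at both `m` and `D²u`, it follows that
`D²u = m`.
-/

open MeasureTheory Metric Set Filter
open scoped ContDiff Matrix Topology

local notation "𝔼" n:max => EuclideanSpace ℝ (Fin n)

section PartialDerivatives

variable {n : ℕ} {F : Type*} [NormedAddCommGroup F] [NormedSpace ℝ F]

/-- The partial derivative `∂ᵢ f`, with the junk value `0` where `f` is not differentiable. -/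
noncomputable def pderiv (i : Fin n) (f : 𝔼 n → F) (x : 𝔼 n) : F :=
  fderiv ℝ f x (EuclideanSpace.single i 1)

/-- The gradient of `f` at `x` as a tuple of partial derivatives, to be paired with coefficient
matrices by `⬝ᵥ` and `*ᵥ`. -/
noncomputable def grad (f : 𝔼 n → ℝ) (x : 𝔼 n) : Fin n → ℝ :=
  fun i => pderiv i f x

section VectorValued

variable {f g : 𝔼 n → F} {x : 𝔼 n}

theorem contDiff_pderiv {m k : WithTop ℕ∞} (hf : ContDiff ℝ k f) (hmk : m + 1 ≤ k) (i : Fin n) :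
    ContDiff ℝ m (pderiv i f) :=
  (hf.fderiv_right hmk).clm_apply contDiff_const

theorem pderiv_const (c : F) (i : Fin n) : pderiv i (fun _ => c) x = 0 := by
  simp [pderiv]

theorem pderiv_neg (i : Fin n) : pderiv i (fun y => -f y) x = -pderiv i f x := by
  simp [pderiv, fderiv_fun_neg]

theorem pderiv_add (hf : DifferentiableAt ℝ f x) (hg : DifferentiableAt ℝ g x) (i : Fin n) :
    pderiv i (fun y => f y + g y) x = pderiv i f x + pderiv i g x := by
  simp [pderiv, fderiv_fun_add hf hg]

theorem pderiv_mul {R : Type*} [NormedRing R] [NormedAlgebra ℝ R] {f g : 𝔼 n → R}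
    (hf : DifferentiableAt ℝ f x) (hg : DifferentiableAt ℝ g x) (i : Fin n) :
    pderiv i (fun y => f y * g y) x = pderiv i f x * g x + f x * pderiv i g x := by
  simp [pderiv, fderiv_fun_mul' hf hg, add_comm]

theorem pderiv_fderiv_comp {G : Type*} [NormedAddCommGroup G] [NormedSpace ℝ G] {g : F → G}
    (hg : DifferentiableAt ℝ g (f x)) (hf : DifferentiableAt ℝ f x) (i : Fin n) :
    pderiv i (fun y => g (f y)) x = fderiv ℝ g (f x) (pderiv i f x) := by
  have := fderiv_comp x hg hf
  rw [Function.comp_def] at this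
  simp [pderiv, this]

theorem pderiv_pderiv (hf : ContDiff ℝ 2 f) (i j : Fin n) (x : 𝔼 n) :
    pderiv i (pderiv j f) x =
      fderiv ℝ (fderiv ℝ f) x (EuclideanSpace.single i 1) (EuclideanSpace.single j 1) := by
  have hf' : DifferentiableAt ℝ (fderiv ℝ f) x :=
    (hf.fderiv_right one_add_one_eq_two.le).differentiable one_ne_zero x
  change fderiv ℝ (fun y => fderiv ℝ f y (EuclideanSpace.single j 1)) x _ = _
  rw [fderiv_clm_apply hf' (by fun_prop)]
  simp

theorem pderiv_comm (hf : ContDiff ℝ 2 f) (i j : Fin n) :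
    pderiv i (pderiv j f) = pderiv j (pderiv i f) := by
  ext x
  rw [pderiv_pderiv hf, pderiv_pderiv hf]
  exact hf.contDiffAt.isSymmSndFDerivAt (by simp) _ _

end VectorValued

variable {f g : 𝔼 n → ℝ} {x : 𝔼 n}

theorem continuous_pderiv (hf : ContDiff ℝ 1 f) (i : Fin n) : Continuous (pderiv i f) :=
  (contDiff_pderiv hf (zero_add _).le i).continuous

theorem hasCompactSupport_pderiv (hf : HasCompactSupport f) (i : Fin n) :
    HasCompactSupport (pderiv i f) :=
  hf.fderiv_apply (𝕜 := ℝ) _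

theorem pderiv_const_mul (hf : DifferentiableAt ℝ f x) (c : ℝ) (i : Fin n) :
    pderiv i (fun y => c * f y) x = c * pderiv i f x := by
  simp [pderiv, fderiv_const_mul hf]

theorem pderiv_comp {h : ℝ → ℝ} {h' : ℝ} (hh : HasDerivAt h h' (f x))
    (hf : DifferentiableAt ℝ f x) (i : Fin n) :
    pderiv i (fun y => h (f y)) x = h' * pderiv i f x := by
  have := (hh.comp_hasFDerivAt x hf.hasFDerivAt).fderiv
  rw [Function.comp_def] at this
  simp [pderiv, this]

theorem pderiv_comp_add_smul {x₀ : 𝔼 n} {r : ℝ} (hf : DifferentiableAt ℝ f (x₀ + r • x))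
    (i : Fin n) : pderiv i (fun y => f (x₀ + r • y)) x = r * pderiv i f (x₀ + r • x) := by
  have hinner : HasFDerivAt (fun y : 𝔼 n => x₀ + r • y) (r • ContinuousLinearMap.id ℝ (𝔼 n)) x :=
    ((hasFDerivAt_id x).const_smul r).const_add x₀
  have := (hf.hasFDerivAt.comp x hinner).fderiv
  rw [Function.comp_def] at this
  simp [pderiv, this]

theorem Hess_apply (hf : ContDiff ℝ 2 f) (x : 𝔼 n) (i j : Fin n) :
    Hess n f x i j = pderiv i (pderiv j f) x := by
  simp [Hess, iteratedFDeriv_two_apply, pderiv_pderiv hf]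

theorem fderiv_eq_innerSL_grad (f : 𝔼 n → ℝ) (x : 𝔼 n) :
    fderiv ℝ f x = innerSL ℝ (WithLp.toLp 2 (grad f x)) := by
  refine ContinuousLinearMap.coe_injective ((EuclideanSpace.basisFun (Fin n) ℝ).toBasis.ext ?_)
  intro i
  simp [grad, pderiv, EuclideanSpace.inner_single_right]

theorem grad_dotProduct_grad (f : 𝔼 n → ℝ) (x : 𝔼 n) :
    grad f x ⬝ᵥ grad f x = ‖fderiv ℝ f x‖ ^ 2 := by
  rw [fderiv_eq_innerSL_grad, innerSL_apply_norm, EuclideanSpace.real_norm_sq_eq]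
  simp [dotProduct, sq]

end PartialDerivatives

section DivergenceForm

variable {n : ℕ}

/-- The second order operator `∑ᵢⱼ aᵢⱼ ∂ᵢ∂ⱼ`. -/
noncomputable def ellipticOp (a : 𝔼 n → Matrix (Fin n) (Fin n) ℝ) (f : 𝔼 n → ℝ) (x : 𝔼 n) : ℝ :=
  ∑ i, ∑ j, a x i j * pderiv i (pderiv j f) x

/-- Symmetric coefficients `a` with `|p|² ≤ p · a p ≤ Λ |p|²` and divergence-free columns. For such
coefficients `∑ᵢⱼ aᵢⱼ ∂ᵢ∂ⱼ f` coincides with the divergence form operator `div (a ∇f)`. -/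
structure IsDivFreeElliptic (Λ : ℝ) (a : 𝔼 n → Matrix (Fin n) (Fin n) ℝ) : Prop where
  contDiff : ∀ i j, ContDiff ℝ 1 fun x => a x i j
  isSymm : ∀ x, (a x).IsSymm
  divFree : ∀ x j, ∑ i, pderiv i (fun y => a y i j) x = 0
  le_dotProduct_mulVec : ∀ x p, p ⬝ᵥ p ≤ p ⬝ᵥ a x *ᵥ p
  dotProduct_mulVec_le : ∀ x p, p ⬝ᵥ a x *ᵥ p ≤ Λ * (p ⬝ᵥ p)

theorem dotProduct_mulVec_eq_sum (A : Matrix (Fin n) (Fin n) ℝ) (p q : Fin n → ℝ) :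
    p ⬝ᵥ A *ᵥ q = ∑ i, ∑ j, A i j * p i * q j := by
  simp only [dotProduct, Matrix.mulVec, Finset.mul_sum]
  exact Finset.sum_congr rfl fun i _ => Finset.sum_congr rfl fun j _ => by ring

theorem dotProduct_mulVec_comm_of_isSymm {A : Matrix (Fin n) (Fin n) ℝ} (hA : A.IsSymm)
    (p q : Fin n → ℝ) : p ⬝ᵥ A *ᵥ q = q ⬝ᵥ A *ᵥ p := by
  rw [Matrix.dotProduct_mulVec, ← Matrix.mulVec_transpose, hA, dotProduct_comm]

theorem integral_pderiv_eq_zero {f : 𝔼 n → ℝ} (hf : ContDiff ℝ 1 f) (hc : HasCompactSupport f)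
    (i : Fin n) : ∫ x, pderiv i f x = 0 := by
  have hf' : Integrable fun x => fderiv ℝ f x (EuclideanSpace.single i 1) :=
    (continuous_pderiv hf i).integrable_of_hasCompactSupport (hasCompactSupport_pderiv hc i)
  have := integral_mul_fderiv_eq_neg_fderiv_mul_of_integrable (𝕜 := ℝ) (μ := volume)
    (f := fun _ => (1 : ℝ)) (g := f) (v := EuclideanSpace.single i 1) (by simp)
    (by simpa using hf') (by simpa using hf.continuous.integrable_of_hasCompactSupport hc)
    (fun x _ => by fun_prop) (fun x _ => hf.differentiable one_ne_zero x)
  simpa [pderiv] using this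

namespace IsDivFreeElliptic

variable {Λ : ℝ} {a : 𝔼 n → Matrix (Fin n) (Fin n) ℝ} (ha : IsDivFreeElliptic Λ a)
include ha

theorem sum_pderiv_mul_eq {f ζ : 𝔼 n → ℝ} (hf : ContDiff ℝ 2 f) (hζ : ContDiff ℝ 1 ζ)
    (x : 𝔼 n) : ∑ i, ∑ j, pderiv i (fun y => ζ y * (a y i j * pderiv j f y)) x =
      ζ x * ellipticOp a f x + grad ζ x ⬝ᵥ a x *ᵥ grad f x := by
  have hterm : ∀ i j, pderiv i (fun y => ζ y * (a y i j * pderiv j f y)) x =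
      (ζ x * (a x i j * pderiv i (pderiv j f) x) + a x i j * pderiv i ζ x * pderiv j f x) +
        ζ x * (pderiv i (fun y => a y i j) x * pderiv j f x) := fun i j => by
    have ha' : DifferentiableAt ℝ (fun y => a y i j) x :=
      (ha.contDiff i j).differentiable one_ne_zero x
    have hf' : DifferentiableAt ℝ (pderiv j f) x :=
      (contDiff_pderiv hf one_add_one_eq_two.le j).differentiable one_ne_zero x
    rw [pderiv_mul (hζ.differentiable one_ne_zero x) (ha'.fun_mul hf'), pderiv_mul ha' hf']
    ring
  have hdiv : ∑ i, ∑ j, ζ x * (pderiv i (fun y => a y i j) x * pderiv j f x) = 0 := by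
    rw [Finset.sum_comm]
    refine Finset.sum_eq_zero fun j _ => ?_
    rw [← Finset.mul_sum, ← Finset.sum_mul, ha.divFree x j, zero_mul, mul_zero]
  simp_rw [hterm, Finset.sum_add_distrib, hdiv, add_zero, dotProduct_mulVec_eq_sum, ellipticOp,
    grad, Finset.mul_sum]

theorem integrable_pderiv_mul {f ζ : 𝔼 n → ℝ} (hf : ContDiff ℝ 2 f) (hζ : ContDiff ℝ 1 ζ)
    (hc : HasCompactSupport ζ) (i j : Fin n) :
    Integrable (pderiv i fun y => ζ y * (a y i j * pderiv j f y)) :=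
  (continuous_pderiv (hζ.mul ((ha.contDiff i j).mul
    (contDiff_pderiv hf one_add_one_eq_two.le j))) i).integrable_of_hasCompactSupport
      (hasCompactSupport_pderiv hc.mul_right i)

theorem integrable_mul_ellipticOp_add {f ζ : 𝔼 n → ℝ} (hf : ContDiff ℝ 2 f) (hζ : ContDiff ℝ 1 ζ)
    (hc : HasCompactSupport ζ) :
    Integrable fun x => ζ x * ellipticOp a f x + grad ζ x ⬝ᵥ a x *ᵥ grad f x := by
  simp_rw [← ha.sum_pderiv_mul_eq hf hζ]
  exact integrable_finsetSum _ fun i _ => integrable_finsetSum _ fun j _ =>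
    ha.integrable_pderiv_mul hf hζ hc i j

theorem integral_mul_ellipticOp_add {f ζ : 𝔼 n → ℝ} (hf : ContDiff ℝ 2 f) (hζ : ContDiff ℝ 1 ζ)
    (hc : HasCompactSupport ζ) :
    ∫ x, (ζ x * ellipticOp a f x + grad ζ x ⬝ᵥ a x *ᵥ grad f x) = 0 := by
  have hint := ha.integrable_pderiv_mul hf hζ hc
  simp_rw [← ha.sum_pderiv_mul_eq hf hζ]
  rw [integral_finsetSum _ fun i _ => integrable_finsetSum _ fun j _ => hint i j]
  refine Finset.sum_eq_zero fun i _ => ?_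
  rw [integral_finsetSum _ fun j _ => hint i j]
  exact Finset.sum_eq_zero fun j _ => integral_pderiv_eq_zero
    (hζ.mul ((ha.contDiff i j).mul (contDiff_pderiv hf one_add_one_eq_two.le j))) hc.mul_right i

end IsDivFreeElliptic

end DivergenceForm

section Energy

variable {n : ℕ} {Λ : ℝ} {a : 𝔼 n → Matrix (Fin n) (Fin n) ℝ}

theorem integrable_mul_norm_fderiv_sq {f φ : 𝔼 n → ℝ} (hf : Continuous f) (hφ : ContDiff ℝ 1 φ)
    (hc : HasCompactSupport φ) : Integrable fun x => f x * ‖fderiv ℝ φ x‖ ^ 2 := by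
  have hc' : HasCompactSupport fun x => ‖fderiv ℝ φ x‖ ^ 2 :=
    (hc.fderiv (𝕜 := ℝ)).comp_left (g := fun L => ‖L‖ ^ 2) (by simp)
  exact (hf.mul ((hφ.continuous_fderiv one_ne_zero).norm.pow 2)).integrable_of_hasCompactSupport
    hc'.mul_left

theorem integrable_sq_mul_norm_fderiv_sq {f φ : 𝔼 n → ℝ} (hf : ContDiff ℝ 1 f)
    (hφ : Continuous φ) (hc : HasCompactSupport φ) :
    Integrable fun x => φ x ^ 2 * ‖fderiv ℝ f x‖ ^ 2 := by
  have hc' : HasCompactSupport fun x => φ x ^ 2 := hc.comp_left (g := fun t => t ^ 2) (by simp)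
  exact ((hφ.pow 2).mul
    ((hf.continuous_fderiv one_ne_zero).norm.pow 2)).integrable_of_hasCompactSupport hc'.mul_right

namespace IsDivFreeElliptic

variable (ha : IsDivFreeElliptic Λ a)
include ha

/- Completing the square: twice the right-hand side exceeds `s² p · a p` by
`(s p + 2 t q) · a (s p + 2 t q) ≥ 0`, up to `q · a q ≤ Λ |q|²`. -/
theorem half_sq_mul_le (x : 𝔼 n) (p q : Fin n → ℝ) (s t : ℝ) :
    1 / 2 * s ^ 2 * (p ⬝ᵥ p) ≤
      s ^ 2 * (p ⬝ᵥ a x *ᵥ p) + 2 * s * t * (q ⬝ᵥ a x *ᵥ p) + 2 * t ^ 2 * (Λ * (q ⬝ᵥ q)) := by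
  have hsq : 0 ≤ (s • p + (2 * t) • q) ⬝ᵥ a x *ᵥ (s • p + (2 * t) • q) :=
    (Finset.sum_nonneg fun _ _ => mul_self_nonneg _).trans (ha.le_dotProduct_mulVec x _)
  have hpq : p ⬝ᵥ a x *ᵥ q = q ⬝ᵥ a x *ᵥ p := dotProduct_mulVec_comm_of_isSymm (ha.isSymm x) p q
  simp only [Matrix.mulVec_add, Matrix.mulVec_smul, add_dotProduct, dotProduct_add,
    smul_dotProduct, dotProduct_smul, smul_eq_mul, hpq] at hsq
  have hp := mul_le_mul_of_nonneg_left (ha.le_dotProduct_mulVec x p) (sq_nonneg s)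
  have hq := mul_le_mul_of_nonneg_left (ha.dotProduct_mulVec_le x q) (sq_nonneg t)
  linarith

/- Integrate the equation against the test function `φ² h`. -/
theorem integral_sq_mul_norm_fderiv_sq_le {f h φ : 𝔼 n → ℝ} (hf : ContDiff ℝ 2 f)
    (hh : ContDiff ℝ 1 h)
    (hfh : ∀ x, grad f x ⬝ᵥ a x *ᵥ grad f x ≤
      h x * ellipticOp a f x + grad h x ⬝ᵥ a x *ᵥ grad f x)
    (hφ : ContDiff ℝ 1 φ) (hc : HasCompactSupport φ) :
    ∫ x, φ x ^ 2 * ‖fderiv ℝ f x‖ ^ 2 ≤ 4 * Λ * ∫ x, h x ^ 2 * ‖fderiv ℝ φ x‖ ^ 2 := by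
  have hζ : ContDiff ℝ 1 fun x => φ x ^ 2 * h x := (hφ.pow 2).mul hh
  have hζc : HasCompactSupport fun x => φ x ^ 2 * h x :=
    (hc.comp_left (g := fun t => t ^ 2) (by simp)).mul_right
  have hgrad : ∀ x, grad (fun x => φ x ^ 2 * h x) x =
      (2 * φ x * h x) • grad φ x + φ x ^ 2 • grad h x := fun x => by
    ext i
    have hφx := hφ.differentiable one_ne_zero x
    simp only [grad, pderiv_mul (hφx.fun_pow 2) (hh.differentiable one_ne_zero x),
      pderiv_comp (hasDerivAt_pow 2 (φ x)) hφx, Pi.add_apply, Pi.smul_apply, smul_eq_mul]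
    norm_num
    ring
  have hpointwise : ∀ x, 1 / 2 * (φ x ^ 2 * ‖fderiv ℝ f x‖ ^ 2) ≤
      ((φ x ^ 2 * h x) * ellipticOp a f x + grad (fun x => φ x ^ 2 * h x) x ⬝ᵥ a x *ᵥ grad f x) +
        2 * Λ * (h x ^ 2 * ‖fderiv ℝ φ x‖ ^ 2) := fun x => by
    have hsq := ha.half_sq_mul_le x (grad f x) (grad φ x) (φ x) (h x)
    have hx := mul_le_mul_of_nonneg_left (hfh x) (sq_nonneg (φ x))
    rw [hgrad, add_dotProduct, smul_dotProduct, smul_dotProduct, smul_eq_mul, smul_eq_mul]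
    simp only [grad_dotProduct_grad] at hsq
    linarith
  have hF := (integrable_sq_mul_norm_fderiv_sq (hf.of_le one_le_two) hφ.continuous hc).const_mul
    (1 / 2)
  have hG := (integrable_mul_norm_fderiv_sq (hh.continuous.fun_pow 2) hφ hc).const_mul
    (2 * Λ)
  have hint := ha.integrable_mul_ellipticOp_add hf hζ hζc
  have hle := integral_mono hF (hint.add hG) hpointwise
  simp only [Pi.add_apply] at hle
  rw [integral_add hint hG, ha.integral_mul_ellipticOp_add hf hζ hζc, integral_const_mul,
    integral_const_mul] at hle
  linarith

theorem caccioppoli {f φ : 𝔼 n → ℝ} (hf : ContDiff ℝ 2 f) (hf0 : ∀ x, 0 ≤ f x)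
    (hLf : ∀ x, 0 ≤ ellipticOp a f x) (hφ : ContDiff ℝ 1 φ) (hc : HasCompactSupport φ) :
    ∫ x, φ x ^ 2 * ‖fderiv ℝ f x‖ ^ 2 ≤ 4 * Λ * ∫ x, f x ^ 2 * ‖fderiv ℝ φ x‖ ^ 2 :=
  ha.integral_sq_mul_norm_fderiv_sq_le hf (hf.of_le one_le_two)
    (fun x => le_add_of_nonneg_left (mul_nonneg (hf0 x) (hLf x))) hφ hc

theorem log_energy_le {f φ : 𝔼 n → ℝ} (hf : ContDiff ℝ 2 f)
    (hLf : ∀ x, grad f x ⬝ᵥ a x *ᵥ grad f x ≤ ellipticOp a f x)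
    (hφ : ContDiff ℝ 1 φ) (hc : HasCompactSupport φ) :
    ∫ x, φ x ^ 2 * ‖fderiv ℝ f x‖ ^ 2 ≤ 4 * Λ * ∫ x, ‖fderiv ℝ φ x‖ ^ 2 := by
  have hgrad : ∀ x, grad (fun _ : 𝔼 n => (1 : ℝ)) x = 0 := fun x => by
    ext i
    exact pderiv_const 1 i
  simpa only [one_pow, one_mul] using ha.integral_sq_mul_norm_fderiv_sq_le hf
    (h := fun _ => 1) contDiff_const (fun x => by simpa [hgrad] using hLf x) hφ hc

end IsDivFreeElliptic

end Energy

section Cutoff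

variable {E : Type*} [NormedAddCommGroup E] [InnerProductSpace ℝ E]

/-- `φ` is a smooth cutoff function between the balls of radii `s < r` about the origin, with
gradient at most `K / (r - s)`. -/
structure IsCutoff (K s r : ℝ) (φ : E → ℝ) : Prop where
  contDiff : ContDiff ℝ ∞ φ
  nonneg : ∀ x, 0 ≤ φ x
  le_one : ∀ x, φ x ≤ 1
  eq_one : ∀ x ∈ closedBall (0 : E) s, φ x = 1
  tsupport_subset : tsupport φ ⊆ closedBall 0 r
  norm_fderiv_le : ∀ x, ‖fderiv ℝ φ x‖ ≤ K / (r - s)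

theorem exists_abs_deriv_smoothTransition_le :
    ∃ K, ∀ t, |deriv Real.smoothTransition t| ≤ K := by
  have hcont : Continuous (deriv Real.smoothTransition) :=
    (Real.smoothTransition.contDiff (n := 1)).continuous_deriv le_rfl
  refine hcont.bounded_above_of_compact_support
    (HasCompactSupport.intro (isCompact_Icc (a := (0 : ℝ)) (b := 1)) fun t ht => ?_)
  rcases not_and_or.1 ht with ht | ht
  · have : Real.smoothTransition =ᶠ[𝓝 t] fun _ => 0 := by
      filter_upwards [Iio_mem_nhds (not_le.1 ht)] with y hy
      exact Real.smoothTransition.zero_of_nonpos hy.le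
    rw [this.deriv_eq, deriv_const]
  · have : Real.smoothTransition =ᶠ[𝓝 t] fun _ => 1 := by
      filter_upwards [Ioi_mem_nhds (not_le.1 ht)] with y hy
      exact Real.smoothTransition.one_of_one_le hy.le
    rw [this.deriv_eq, deriv_const]

theorem norm_fderiv_sub_norm_sq_div_le {s r : ℝ} (hs : 0 ≤ s) (hsr : s < r) {x : E}
    (hx : x ∈ closedBall (0 : E) r) :
    ‖fderiv ℝ (fun y : E => (r ^ 2 - ‖y‖ ^ 2) / (r ^ 2 - s ^ 2)) x‖ ≤ 2 / (r - s) := by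
  have hd : 0 < r ^ 2 - s ^ 2 := by nlinarith
  have hderiv : HasFDerivAt (fun y : E => (r ^ 2 - ‖y‖ ^ 2) / (r ^ 2 - s ^ 2))
      ((r ^ 2 - s ^ 2)⁻¹ • -((2 : ℝ) • innerSL ℝ x : E →L[ℝ] ℝ)) x := by
    simpa only [div_eq_inv_mul, two_smul] using
      ((hasStrictFDerivAt_norm_sq x).hasFDerivAt.const_sub (r ^ 2)).const_mul (r ^ 2 - s ^ 2)⁻¹
  rw [hderiv.fderiv, norm_smul, norm_neg, norm_smul, innerSL_apply_norm, norm_inv,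
    Real.norm_of_nonneg hd.le, Real.norm_two]
  calc (r ^ 2 - s ^ 2)⁻¹ * (2 * ‖x‖)
      ≤ (r ^ 2 - s ^ 2)⁻¹ * (2 * (r + s)) := by
        have := mem_closedBall_zero_iff.1 hx
        gcongr
        linarith
    _ = 2 / (r - s) := by
        have : r - s ≠ 0 := by linarith
        have : r + s ≠ 0 := by linarith
        rw [sq_sub_sq]
        field_simp

theorem exists_isCutoff (E : Type*) [NormedAddCommGroup E] [InnerProductSpace ℝ E] :
    ∃ K, 0 ≤ K ∧ ∀ s r : ℝ, 0 ≤ s → s < r → ∃ φ : E → ℝ, IsCutoff K s r φ := by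
  obtain ⟨K, hK⟩ := exists_abs_deriv_smoothTransition_le
  have hK0 : 0 ≤ K := (abs_nonneg _).trans (hK 0)
  refine ⟨K * 2, by positivity, fun s r hs hsr => ?_⟩
  have hd : 0 < r ^ 2 - s ^ 2 := by nlinarith
  set ρ : E → ℝ := fun x => (r ^ 2 - ‖x‖ ^ 2) / (r ^ 2 - s ^ 2)
  have hρ : ContDiff ℝ ∞ ρ := (contDiff_const.sub (contDiff_norm_sq ℝ)).div_const _
  have hsupp : tsupport (fun x => Real.smoothTransition (ρ x)) ⊆ closedBall 0 r := by
    refine closure_minimal (fun x hx => ?_) isClosed_closedBall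
    have hpos : 0 < ρ x := not_le.1 fun h => hx (Real.smoothTransition.zero_of_nonpos h)
    have : 0 < r ^ 2 - ‖x‖ ^ 2 := (div_pos_iff_of_pos_right hd).1 hpos
    exact mem_closedBall_zero_iff.2 (le_of_sq_le_sq (by linarith) (by linarith))
  refine ⟨fun x => Real.smoothTransition (ρ x), Real.smoothTransition.contDiff.comp hρ,
    fun x => Real.smoothTransition.nonneg _, fun x => Real.smoothTransition.le_one _,
    fun x hx => ?_, hsupp, fun x => ?_⟩
  · have hxs : ‖x‖ ^ 2 ≤ s ^ 2 := pow_le_pow_left₀ (norm_nonneg x) (mem_closedBall_zero_iff.1 hx) 2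
    exact Real.smoothTransition.one_of_one_le ((one_le_div hd).2 (by linarith))
  by_cases hx : x ∈ closedBall (0 : E) r
  · have hψ : HasDerivAt Real.smoothTransition (deriv Real.smoothTransition (ρ x)) (ρ x) :=
      ((Real.smoothTransition.contDiff (n := 1)).differentiable one_ne_zero _).hasDerivAt
    have hderiv :=
      (hψ.comp_hasFDerivAt x (hρ.differentiable (by simp) x).hasFDerivAt).fderiv
    rw [Function.comp_def] at hderiv
    rw [hderiv, norm_smul, mul_div_assoc, Real.norm_eq_abs]
    exact mul_le_mul (hK _) (norm_fderiv_sub_norm_sq_div_le hs hsr hx) (norm_nonneg _) hK0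
  · rw [image_eq_zero_of_notMem_tsupport fun h => hx (hsupp (tsupport_fderiv_subset ℝ h)),
      norm_zero]
    exact div_nonneg (by positivity) (by linarith)

namespace IsCutoff

variable {K s r : ℝ} {φ : E → ℝ} (hφ : IsCutoff K s r φ)
include hφ

theorem hasCompactSupport [FiniteDimensional ℝ E] : HasCompactSupport φ :=
  (isCompact_closedBall 0 r).of_isClosed_subset (isClosed_tsupport φ) hφ.tsupport_subset

theorem eq_zero {x : E} (hx : x ∉ closedBall (0 : E) r) : φ x = 0 :=
  image_eq_zero_of_notMem_tsupport fun h => hx (hφ.tsupport_subset h)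

theorem fderiv_eq_zero {x : E} (hx : x ∉ closedBall (0 : E) r) : fderiv ℝ φ x = 0 :=
  image_eq_zero_of_notMem_tsupport fun h => hx (hφ.tsupport_subset (tsupport_fderiv_subset ℝ h))

end IsCutoff

end Cutoff

section Sobolev

theorem exists_integral_rpow_le_integral_norm_fderiv {E : Type*} [NormedAddCommGroup E]
    [NormedSpace ℝ E] [FiniteDimensional ℝ E] [MeasurableSpace E] [BorelSpace E] (μ : Measure E)
    [μ.IsAddHaarMeasure] {χ : ℝ} (hχ : Real.HolderConjugate (Module.finrank ℝ E) χ) :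
    ∃ C, 0 < C ∧ ∀ u : E → ℝ, ContDiff ℝ 1 u → HasCompactSupport u → (∀ x, 0 ≤ u x) →
      ∫ x, u x ^ χ ∂μ ≤ (C * ∫ x, ‖fderiv ℝ u x‖ ∂μ) ^ χ := by
  have hχ0 : 0 < χ := hχ.symm.pos
  set C₀ : NNReal := lintegralPowLePowLIntegralFDerivConst μ χ
  refine ⟨(C₀ + 1 : ℝ) ^ χ⁻¹, by positivity, fun u hu hc hu0 => ?_⟩
  set D := ∫ x, ‖fderiv ℝ u x‖ ∂μ
  have hD0 : 0 ≤ D := integral_nonneg fun x => norm_nonneg _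
  have hD : ∫⁻ x, ‖fderiv ℝ u x‖ₑ ∂μ = ENNReal.ofReal D :=
    (ofReal_integral_norm_eq_lintegral_enorm ((hu.continuous_fderiv
      one_ne_zero).integrable_of_hasCompactSupport (hc.fderiv (𝕜 := ℝ)))).symm
  have hsobolev := lintegral_pow_le_pow_lintegral_fderiv μ hu hc hχ
  rw [hD, ENNReal.ofReal_rpow_of_nonneg hD0 hχ0.le, ← ENNReal.ofReal_coe_nnreal,
    ← ENNReal.ofReal_mul C₀.coe_nonneg] at hsobolev
  have hpow : ∫ x, u x ^ χ ∂μ = (∫⁻ x, ‖u x‖ₑ ^ χ ∂μ).toReal := by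
    rw [integral_eq_lintegral_of_nonneg_ae (.of_forall fun x => Real.rpow_nonneg (hu0 x) χ)
      (hu.continuous.rpow_const fun x => Or.inr hχ0.le).aestronglyMeasurable]
    congr 2 with x
    rw [← ENNReal.ofReal_rpow_of_nonneg (hu0 x) hχ0.le, Real.enorm_of_nonneg (hu0 x)]
  calc ∫ x, u x ^ χ ∂μ ≤ C₀ * D ^ χ :=
        hpow.trans_le (ENNReal.toReal_le_of_le_ofReal (by positivity) hsobolev)
    _ ≤ (C₀ + 1) * D ^ χ := by gcongr; linarith
    _ = ((C₀ + 1 : ℝ) ^ χ⁻¹ * D) ^ χ := by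
        rw [Real.mul_rpow (by positivity) hD0, Real.rpow_inv_rpow (by positivity) hχ0.ne']

end Sobolev

section MoserStep

theorem integral_mul_le_mul_setIntegral {X : Type*} [MeasurableSpace X] {μ : Measure X} {S : Set X}
    {g w : X → ℝ} {c : ℝ} (hS : MeasurableSet S) (hg0 : ∀ x, 0 ≤ g x) (hwc : ∀ x ∈ S, w x ≤ c)
    (hw0 : ∀ x ∉ S, w x = 0) (hg : IntegrableOn g S μ) (hgw : Integrable (fun x => g x * w x) μ) :
    ∫ x, g x * w x ∂μ ≤ c * ∫ x in S, g x ∂μ := by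
  rw [← setIntegral_eq_integral_of_forall_compl_eq_zero (s := S)
    fun x hx => by rw [hw0 x hx, mul_zero], ← integral_const_mul]
  refine setIntegral_mono_on hgw.integrableOn (hg.const_mul c) hS fun x hx => ?_
  rw [mul_comm c]
  exact mul_le_mul_of_nonneg_left (hwc x hx) (hg0 x)

theorem norm_fderiv_mul_sq_le {E : Type*} [NormedAddCommGroup E] [NormedSpace ℝ E] {f φ : E → ℝ}
    {x : E} (hf : DifferentiableAt ℝ f x) (hφ : DifferentiableAt ℝ φ x) {d : ℝ} (hd : 0 < d) :
    ‖fderiv ℝ (fun y => (φ y * f y) ^ 2) x‖ ≤ d⁻¹ * (f x ^ 2 * φ x ^ 2) +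
      2 * d * (φ x ^ 2 * ‖fderiv ℝ f x‖ ^ 2 + f x ^ 2 * ‖fderiv ℝ φ x‖ ^ 2) := by
  set A := φ x * ‖fderiv ℝ f x‖
  set B := f x * ‖fderiv ℝ φ x‖
  have hprod : ‖fderiv ℝ (fun y => φ y * f y) x‖ ≤ |A| + |B| := by
    rw [fderiv_fun_mul hφ hf]
    refine (norm_add_le _ _).trans_eq ?_
    simp [A, B, norm_smul, abs_mul]
  have hsq : fderiv ℝ (fun y => (φ y * f y) ^ 2) x =
      (2 * (φ x * f x)) • fderiv ℝ (fun y => φ y * f y) x := by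
    simpa using fderiv_fun_pow 2 (hφ.fun_mul hf)
  have hcs : (|A| + |B|) ^ 2 ≤ 2 * (A ^ 2 + B ^ 2) := by
    rw [← sq_abs A, ← sq_abs B]
    exact add_sq_le
  have hyoung := two_mul_le_add_sq (|φ x * f x|) (d * (|A| + |B|))
  calc ‖fderiv ℝ (fun y => (φ y * f y) ^ 2) x‖
      ≤ 2 * |φ x * f x| * (|A| + |B|) := by
        rw [hsq, norm_smul, norm_mul, Real.norm_two, Real.norm_eq_abs]
        gcongr
    _ = d⁻¹ * (2 * |φ x * f x| * (d * (|A| + |B|))) := by field_simp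
    _ ≤ d⁻¹ * (|φ x * f x| ^ 2 + (d * (|A| + |B|)) ^ 2) := by gcongr
    _ = d⁻¹ * (f x ^ 2 * φ x ^ 2) + d * (|A| + |B|) ^ 2 := by rw [sq_abs]; field_simp
    _ ≤ d⁻¹ * (f x ^ 2 * φ x ^ 2) + d * (2 * (A ^ 2 + B ^ 2)) := by gcongr
    _ = _ := by simp only [A, B]; ring

variable {n : ℕ} {Λ : ℝ} {a : 𝔼 n → Matrix (Fin n) (Fin n) ℝ}

theorem IsCutoff.integral_sq_mul_sq_le {f φ : 𝔼 n → ℝ} (hf : Continuous f) {K s r : ℝ}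
    (hφ : IsCutoff K s r φ) : ∫ x, f x ^ 2 * φ x ^ 2 ≤ ∫ x in closedBall 0 r, f x ^ 2 := by
  have hc : HasCompactSupport fun x => φ x ^ 2 :=
    hφ.hasCompactSupport.comp_left (g := fun t => t ^ 2) (by simp)
  simpa only [one_mul] using integral_mul_le_mul_setIntegral (c := 1) measurableSet_closedBall
    (fun x => sq_nonneg (f x)) (fun x _ => pow_le_one₀ (hφ.nonneg x) (hφ.le_one x))
    (fun x hx => by simp [hφ.eq_zero hx])
    ((hf.pow 2).continuousOn.integrableOn_compact (isCompact_closedBall 0 r))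
    (((hf.pow 2).mul (hφ.contDiff.continuous.pow 2)).integrable_of_hasCompactSupport hc.mul_left)

theorem IsCutoff.integral_sq_mul_norm_fderiv_sq_le {f φ : 𝔼 n → ℝ} (hf : Continuous f)
    {K s r : ℝ} (hφ : IsCutoff K s r φ) :
    ∫ x, f x ^ 2 * ‖fderiv ℝ φ x‖ ^ 2 ≤
      (K / (r - s)) ^ 2 * ∫ x in closedBall 0 r, f x ^ 2 :=
  integral_mul_le_mul_setIntegral measurableSet_closedBall (fun x => sq_nonneg _)
    (fun x _ => pow_le_pow_left₀ (norm_nonneg _) (hφ.norm_fderiv_le x) 2)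
    (fun x hx => by simp [hφ.fderiv_eq_zero hx])
    ((hf.pow 2).continuousOn.integrableOn_compact (isCompact_closedBall 0 r))
    (integrable_mul_norm_fderiv_sq (hf.fun_pow 2) (hφ.contDiff.of_le (by simp))
      hφ.hasCompactSupport)

theorem IsDivFreeElliptic.integral_norm_fderiv_cutoff_mul_sq_le (ha : IsDivFreeElliptic Λ a)
    (hΛ : 0 ≤ Λ) {f φ : 𝔼 n → ℝ} (hf : ContDiff ℝ 2 f) (hf0 : ∀ x, 0 ≤ f x)
    (hLf : ∀ x, 0 ≤ ellipticOp a f x) {K s r : ℝ} (hsr : s < r) (hφ : IsCutoff K s r φ) :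
    ∫ x, ‖fderiv ℝ (fun y => (φ y * f y) ^ 2) x‖ ≤
      (1 + 2 * (4 * Λ + 1) * K ^ 2) / (r - s) * ∫ x in closedBall 0 r, f x ^ 2 := by
  have hd : 0 < r - s := sub_pos.2 hsr
  set I := ∫ x in closedBall 0 r, f x ^ 2
  have hφ1 : ContDiff ℝ 1 φ := hφ.contDiff.of_le (by simp)
  have hf1 : ContDiff ℝ 1 f := hf.of_le one_le_two
  have hc := hφ.hasCompactSupport
  have hu : ContDiff ℝ 1 fun x => (φ x * f x) ^ 2 := (hφ1.mul hf1).pow 2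
  have huc : HasCompactSupport fun x => (φ x * f x) ^ 2 :=
    (hc.mul_right (f' := f)).comp_left (g := fun t => t ^ 2) (by simp)
  have hDu : Integrable fun x => fderiv ℝ (fun y => (φ y * f y) ^ 2) x :=
    (hu.continuous_fderiv one_ne_zero).integrable_of_hasCompactSupport (huc.fderiv (𝕜 := ℝ))
  have hint0 : Integrable fun x => f x ^ 2 * φ x ^ 2 := by
    simpa only [mul_pow, mul_comm] using hu.continuous.integrable_of_hasCompactSupport huc
  have hint1 := integrable_sq_mul_norm_fderiv_sq hf1 hφ.contDiff.continuous hc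
  have hint2 := integrable_mul_norm_fderiv_sq (hf.continuous.fun_pow 2) hφ1 hc
  have henergy := ha.caccioppoli hf hf0 hLf hφ1 hc
  have hcut := hφ.integral_sq_mul_norm_fderiv_sq_le hf.continuous
  calc ∫ x, ‖fderiv ℝ (fun y => (φ y * f y) ^ 2) x‖
      ≤ ∫ x, ((r - s)⁻¹ * (f x ^ 2 * φ x ^ 2) +
          2 * (r - s) * (φ x ^ 2 * ‖fderiv ℝ f x‖ ^ 2 + f x ^ 2 * ‖fderiv ℝ φ x‖ ^ 2)) :=
        integral_mono hDu.norm
          ((hint0.const_mul _).fun_add ((hint1.fun_add hint2).const_mul _)) fun x =>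
            norm_fderiv_mul_sq_le (hf1.differentiable one_ne_zero x)
              (hφ1.differentiable one_ne_zero x) hd
    _ = (r - s)⁻¹ * (∫ x, f x ^ 2 * φ x ^ 2) + 2 * (r - s) *
          ((∫ x, φ x ^ 2 * ‖fderiv ℝ f x‖ ^ 2) + ∫ x, f x ^ 2 * ‖fderiv ℝ φ x‖ ^ 2) := by
        rw [integral_add (hint0.const_mul _) ((hint1.fun_add hint2).const_mul _),
          integral_const_mul, integral_const_mul, integral_add hint1 hint2]
    _ ≤ (r - s)⁻¹ * I + 2 * (r - s) *
          (4 * Λ * ((K / (r - s)) ^ 2 * I) + (K / (r - s)) ^ 2 * I) := by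
        gcongr
        · exact hφ.integral_sq_mul_sq_le hf.continuous
        · exact henergy.trans (by gcongr)
    _ = (1 + 2 * (4 * Λ + 1) * K ^ 2) / (r - s) * I := by field_simp

theorem exists_moser_step {χ : ℝ} (hχ : Real.HolderConjugate n χ) (hΛ : 0 ≤ Λ) :
    ∃ C, 0 < C ∧ ∀ a, IsDivFreeElliptic (n := n) Λ a → ∀ f : 𝔼 n → ℝ, ContDiff ℝ 2 f →
      (∀ x, 0 ≤ f x) → (∀ x, 0 ≤ ellipticOp a f x) → ∀ s r : ℝ, 0 ≤ s → s < r →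
      ∫ x in closedBall 0 s, (f x ^ 2) ^ χ ≤
        (C / (r - s) * ∫ x in closedBall 0 r, f x ^ 2) ^ χ := by
  have hχ0 : 0 < χ := hχ.symm.pos
  obtain ⟨C, hC, hsobolev⟩ := exists_integral_rpow_le_integral_norm_fderiv
    (volume : Measure (𝔼 n)) (χ := χ) (by rwa [finrank_euclideanSpace_fin])
  obtain ⟨K, -, hcutoff⟩ := exists_isCutoff (𝔼 n)
  refine ⟨C * (1 + 2 * (4 * Λ + 1) * K ^ 2), by positivity,
    fun a ha f hf hf0 hLf s r hs hsr => ?_⟩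
  obtain ⟨φ, hφ⟩ := hcutoff s r hs hsr
  have hu : ContDiff ℝ 1 fun x => (φ x * f x) ^ 2 :=
    ((hφ.contDiff.of_le (by simp)).mul (hf.of_le one_le_two)).pow 2
  have huc : HasCompactSupport fun x => (φ x * f x) ^ 2 :=
    (hφ.hasCompactSupport.mul_right (f' := f)).comp_left (g := fun t => t ^ 2) (by simp)
  have hint : Integrable fun x => ((φ x * f x) ^ 2) ^ χ :=
    (hu.continuous.rpow_const fun x => Or.inr hχ0.le).integrable_of_hasCompactSupport
      (huc.comp_left (g := fun t => t ^ χ) (Real.zero_rpow hχ0.ne'))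
  calc ∫ x in closedBall 0 s, (f x ^ 2) ^ χ
      = ∫ x in closedBall 0 s, ((φ x * f x) ^ 2) ^ χ :=
        setIntegral_congr_fun measurableSet_closedBall fun x hx => by simp [hφ.eq_one x hx]
    _ ≤ ∫ x, ((φ x * f x) ^ 2) ^ χ :=
        setIntegral_le_integral hint (.of_forall fun x => Real.rpow_nonneg (sq_nonneg _) χ)
    _ ≤ (C * ∫ x, ‖fderiv ℝ (fun y => (φ y * f y) ^ 2) x‖) ^ χ :=
        hsobolev _ hu huc fun x => sq_nonneg _
    _ ≤ (C * ((1 + 2 * (4 * Λ + 1) * K ^ 2) / (r - s) * ∫ x in closedBall 0 r, f x ^ 2)) ^ χ := by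
        gcongr
        exact ha.integral_norm_fderiv_cutoff_mul_sq_le hΛ hf hf0 hLf hsr hφ
    _ = _ := by ring_nf

end MoserStep

section MoserIteration

theorem rpow_iterate_le {ν χ A B : ℝ} (h : Real.HolderConjugate ν χ) (hA : 0 ≤ A) (hB : 0 ≤ B)
    {X : ℕ → ℝ} (hX : ∀ j, 0 ≤ X j) (hstep : ∀ j, X (j + 1) ≤ (A * B ^ j * X j) ^ χ) (j : ℕ) :
    (A * B ^ j * B ^ (ν - 1)) ^ ν * X j ≤ ((A * B ^ (ν - 1)) ^ ν * X 0) ^ χ ^ j := by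
  have hχ0 : 0 < χ := h.symm.pos
  have hνχ : ν * χ = ν + χ := by
    have := h.inv_add_inv_eq_one
    field_simp [h.ne_zero, h.symm.ne_zero] at this
    linarith
  have hconj : (ν - 1) * χ = ν := by linarith
  have hpow : ∀ c t : ℝ, 0 ≤ c → 0 ≤ t → (c ^ ν * t) ^ χ = c ^ ν * (c * t) ^ χ := by
    intro c t hc ht
    rw [Real.mul_rpow (by positivity) ht, Real.mul_rpow hc ht, ← Real.rpow_mul hc, hνχ,
      Real.rpow_add_of_nonneg hc h.nonneg hχ0.le, mul_assoc]
  induction j with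
  | zero => simp
  | succ j ih =>
    set c := A * B ^ j
    have hc : 0 ≤ c := by positivity
    have hBν : (B * B ^ (ν - 1)) ^ ν = ((B ^ (ν - 1)) ^ ν) ^ χ := by
      rw [Real.mul_rpow hB (by positivity), ← Real.rpow_mul hB, ← Real.rpow_mul hB,
        mul_right_comm, hconj, ← Real.rpow_add_of_nonneg hB h.nonneg (by nlinarith [h.lt])]
      ring_nf
    calc (A * B ^ (j + 1) * B ^ (ν - 1)) ^ ν * X (j + 1)
        ≤ (A * B ^ (j + 1) * B ^ (ν - 1)) ^ ν * (c * X j) ^ χ := by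
          gcongr
          exact hstep j
      _ = (c * (B * B ^ (ν - 1))) ^ ν * (c * X j) ^ χ := by
          simp only [c, pow_succ, mul_assoc]
      _ = ((B ^ (ν - 1)) ^ ν) ^ χ * (c ^ ν * X j) ^ χ := by
          rw [Real.mul_rpow hc (by positivity), hBν, hpow c (X j) hc (hX j)]
          ring
      _ = ((c * B ^ (ν - 1)) ^ ν * X j) ^ χ := by
          rw [← Real.mul_rpow (by positivity) (mul_nonneg (by positivity) (hX j)),
            Real.mul_rpow hc (by positivity)]
          ring_nf
      _ ≤ (((A * B ^ (ν - 1)) ^ ν * X 0) ^ χ ^ j) ^ χ :=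
          Real.rpow_le_rpow (mul_nonneg (by positivity) (hX j)) ih hχ0.le
      _ = _ := by
          rw [← Real.rpow_mul (mul_nonneg (by positivity) (hX 0)), pow_succ]

theorem le_of_rpow_iterate {ν χ A B : ℝ} (h : Real.HolderConjugate ν χ) (hA : 0 < A) (hB : 1 ≤ B)
    {X : ℕ → ℝ} (hX : ∀ j, 0 ≤ X j) (hstep : ∀ j, X (j + 1) ≤ (A * B ^ j * X j) ^ χ)
    {m t : ℝ} (hm : 0 < m) (ht : 0 < t) (hlow : ∀ j : ℕ, m * t ^ χ ^ j ≤ X j) :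
    t ≤ (A * B ^ (ν - 1)) ^ ν * X 0 := by
  have hB0 : 0 < B := by linarith
  set κ := (A * B ^ (ν - 1)) ^ ν
  have hκ : 0 < κ := by positivity
  have hX0 : 0 ≤ κ * X 0 := mul_nonneg hκ.le (hX 0)
  by_contra! hlt
  have hbound : ∀ j : ℕ, κ * m ≤ (κ * X 0 / t) ^ χ ^ j := fun j => by
    rw [Real.div_rpow hX0 ht.le, le_div_iff₀ (by positivity)]
    calc κ * m * t ^ χ ^ j = κ * (m * t ^ χ ^ j) := mul_assoc _ _ _
      _ ≤ (A * B ^ j * B ^ (ν - 1)) ^ ν * X j := by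
          gcongr
          · exact Real.rpow_le_rpow (by positivity)
              (by gcongr; exact le_mul_of_one_le_right hA.le (one_le_pow₀ hB)) h.nonneg
          · exact hlow j
      _ ≤ (κ * X 0) ^ χ ^ j := rpow_iterate_le h hA.le hB0.le hX hstep j
  have hlim : Tendsto (fun j : ℕ => (κ * X 0 / t) ^ χ ^ j) atTop (𝓝 0) :=
    (tendsto_rpow_atTop_of_base_lt_one _ (by linarith [div_nonneg hX0 ht.le])
      ((div_lt_one ht).2 hlt)).comp (tendsto_pow_atTop_atTop_of_one_lt h.symm.lt)
  exact (mul_pos hκ hm).not_ge (ge_of_tendsto' hlim hbound)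

variable {n : ℕ} {Λ : ℝ} {a : 𝔼 n → Matrix (Fin n) (Fin n) ℝ}

theorem ellipticOp_comp {f : 𝔼 n → ℝ} (hf : ContDiff ℝ 2 f) {g g' : ℝ → ℝ} {g'' : ℝ} {x : 𝔼 n}
    (hg : ∀ y, HasDerivAt g (g' (f y)) (f y)) (hg' : HasDerivAt g' g'' (f x)) :
    ellipticOp a (fun y => g (f y)) x =
      g' (f x) * ellipticOp a f x + g'' * (grad f x ⬝ᵥ a x *ᵥ grad f x) := by
  have hfx : Differentiable ℝ f := hf.differentiable two_ne_zero
  have hg'f : DifferentiableAt ℝ (fun y => g' (f y)) x := hg'.differentiableAt.comp x (hfx x)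
  have hfirst : ∀ j, pderiv j (fun y => g (f y)) = fun y => g' (f y) * pderiv j f y := fun j =>
    funext fun y => pderiv_comp (hg y) (hfx y) j
  simp only [ellipticOp, dotProduct_mulVec_eq_sum, grad, Finset.mul_sum,
    ← Finset.sum_add_distrib, hfirst]
  refine Finset.sum_congr rfl fun i _ => Finset.sum_congr rfl fun j _ => ?_
  rw [pderiv_mul hg'f
    ((contDiff_pderiv hf one_add_one_eq_two.le j).differentiable one_ne_zero x),
    pderiv_comp hg' (hfx x)]
  ring

theorem IsDivFreeElliptic.ellipticOp_rpow_nonneg (ha : IsDivFreeElliptic Λ a) {f : 𝔼 n → ℝ}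
    (hf : ContDiff ℝ 2 f) (hpos : ∀ x, 0 < f x) (hLf : ∀ x, 0 ≤ ellipticOp a f x) {p : ℝ}
    (hp : 1 ≤ p) (x : 𝔼 n) : 0 ≤ ellipticOp a (fun y => f y ^ p) x := by
  rw [ellipticOp_comp hf (fun y => Real.hasDerivAt_rpow_const (Or.inl (hpos y).ne'))
    ((Real.hasDerivAt_rpow_const (Or.inl (hpos x).ne')).const_mul p)]
  have hquad : 0 ≤ grad f x ⬝ᵥ a x *ᵥ grad f x :=
    (Finset.sum_nonneg fun _ _ => mul_self_nonneg _).trans (ha.le_dotProduct_mulVec x _)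
  have := hLf x
  have := hpos x
  have : 0 ≤ p - 1 := by linarith
  positivity

theorem exists_mul_rpow_le_setIntegral {f : 𝔼 n → ℝ} (hf : Continuous f) (hf0 : ∀ x, 0 ≤ f x)
    {ρ t : ℝ} (hρ : 0 < ρ) (ht : 0 ≤ t) (htf : t < f 0) :
    ∃ m, 0 < m ∧ ∀ r, ρ ≤ r → ∀ p : ℝ, 0 ≤ p → m * t ^ p ≤ ∫ x in closedBall 0 r, f x ^ p := by
  obtain ⟨ε, hε, hball⟩ := Metric.mem_nhds_iff.1
    ((isOpen_lt continuous_const hf).mem_nhds htf : {x | t < f x} ∈ 𝓝 0)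
  set U := ball (0 : 𝔼 n) (min ε ρ)
  refine ⟨volume.real U, ENNReal.toReal_pos (measure_ball_pos _ _ (by positivity)).ne'
    measure_ball_lt_top.ne, fun r hr p hp => ?_⟩
  have hcont : Continuous fun x => f x ^ p := hf.rpow_const fun _ => Or.inr hp
  have hint : IntegrableOn (fun x => f x ^ p) (closedBall 0 r) :=
    hcont.continuousOn.integrableOn_compact (isCompact_closedBall 0 r)
  have hU : U ⊆ closedBall 0 r :=
    ball_subset_closedBall.trans (closedBall_subset_closedBall ((min_le_right _ _).trans hr))
  calc volume.real U * t ^ p = ∫ _ in U, t ^ p := by simp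
    _ ≤ ∫ x in U, f x ^ p := by
        refine setIntegral_mono_on (integrableOn_const measure_ball_lt_top.ne) (hint.mono_set hU)
          measurableSet_ball fun x hx => Real.rpow_le_rpow ht ?_ hp
        exact (hball (ball_subset_ball (min_le_left _ _) hx)).le
    _ ≤ ∫ x in closedBall 0 r, f x ^ p :=
        setIntegral_mono_set hint (.of_forall fun x => Real.rpow_nonneg (hf0 x) p) (.of_forall hU)

theorem exists_sq_le_mul_setIntegral (hn : 2 ≤ n) (hΛ : 0 ≤ Λ) :
    ∃ K, 0 < K ∧ ∀ a, IsDivFreeElliptic (n := n) Λ a → ∀ f : 𝔼 n → ℝ, ContDiff ℝ 2 f →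
      (∀ x, 0 < f x) → (∀ x, 0 ≤ ellipticOp a f x) →
      f 0 ^ 2 ≤ K * ∫ x in closedBall 0 1, f x ^ 2 := by
  set χ := Real.conjExponent n
  have hχ : Real.HolderConjugate n χ := .conjExponent (by exact_mod_cast hn)
  obtain ⟨C, hC, hmoser⟩ := exists_moser_step hχ hΛ
  refine ⟨(4 * C * 2 ^ ((n : ℝ) - 1)) ^ (n : ℝ), by positivity,
    fun a ha f hf hpos hLf => le_of_forall_lt_imp_le_of_dense fun t ht => ?_⟩
  rcases le_or_gt t 0 with ht0 | ht0
  · exact ht0.trans (mul_nonneg (by positivity) (integral_nonneg fun x => sq_nonneg _))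
  let r : ℕ → ℝ := fun j => 1 / 2 + (1 / 2) ^ (j + 1)
  let X : ℕ → ℝ := fun j => ∫ x in closedBall 0 (r j), (f x ^ 2) ^ χ ^ j
  have hr : ∀ j, 1 / 2 < r j := fun j =>
    lt_add_of_pos_right _ (by positivity)
  have hX : ∀ j, 0 ≤ X j := fun j => integral_nonneg fun x => Real.rpow_nonneg (sq_nonneg _) _
  have hX0 : X 0 = ∫ x in closedBall 0 1, f x ^ 2 := by norm_num [X, r]
  have hsub : ∀ j, r j - r (j + 1) = (1 / 2) ^ j / 4 := fun j => by simp only [r, pow_succ]; ring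
  have hstep : ∀ j, X (j + 1) ≤ (4 * C * 2 ^ j * X j) ^ χ := fun j => by
    have hχj : 1 ≤ χ ^ j := one_le_pow₀ hχ.symm.lt.le
    have hle := hmoser a ha (fun x => f x ^ χ ^ j) (hf.rpow_const_of_ne fun x => (hpos x).ne')
      (fun x => Real.rpow_nonneg (hpos x).le _) (ha.ellipticOp_rpow_nonneg hf hpos hLf hχj)
      (r (j + 1)) (r j) (by linarith [hr (j + 1)])
      (sub_pos.1 ((hsub j).symm ▸ by positivity))
    have hcoef : C / (r j - r (j + 1)) = 4 * C * 2 ^ j := by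
      rw [hsub, one_div, inv_pow]
      field_simp
    have hsq : ∀ x, (f x ^ χ ^ j) ^ 2 = (f x ^ 2) ^ χ ^ j := fun x =>
      (Real.rpow_pow_comm (hpos x).le _ 2)
    simpa only [hcoef, hsq, ← Real.rpow_mul (sq_nonneg _), ← pow_succ] using hle
  obtain ⟨m, hm, hlow⟩ := exists_mul_rpow_le_setIntegral (hf.continuous.fun_pow 2)
    (fun x => sq_nonneg _) (ρ := 1 / 2) (by norm_num) ht0.le ht
  rw [← hX0]
  exact le_of_rpow_iterate hχ (by positivity) one_le_two hX hstep hm ht0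
    fun j => hlow (r j) (hr j).le _ (pow_nonneg hχ.symm.nonneg j)

end MoserIteration

section Poincare

theorem sq_lintegral_le_lintegral_sq {X : Type*} [MeasurableSpace X] {μ : Measure X}
    [IsProbabilityMeasure μ] {f : X → ENNReal} (hf : AEMeasurable f μ) :
    (∫⁻ x, f x ∂μ) ^ 2 ≤ ∫⁻ x, f x ^ 2 ∂μ := by
  have hle := ENNReal.lintegral_mul_le_Lp_mul_Lq μ .two_two hf aemeasurable_one
  simp only [Pi.mul_apply, mul_one, ENNReal.one_rpow, lintegral_one,
    measure_univ, ENNReal.rpow_ofNat, one_pow] at hle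
  calc (∫⁻ x, f x ∂μ) ^ 2 ≤ ((∫⁻ x, f x ^ 2 ∂μ) ^ (1 / 2 : ℝ)) ^ 2 := by gcongr
    _ = ∫⁻ x, f x ^ 2 ∂μ := by
      rw [← ENNReal.rpow_natCast, ← ENNReal.rpow_mul]
      norm_num

theorem setLIntegral_comp_add_right_le {G : Type*} [AddGroup G] [MeasurableSpace G]
    [MeasurableAdd G] {μ : Measure G} [μ.IsAddRightInvariant] {S T : Set G}
    (hS : MeasurableSet S) (hT : MeasurableSet T) {z : G} (hST : ∀ x ∈ S, x + z ∈ T)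
    (g : G → ENNReal) : ∫⁻ x in S, g (x + z) ∂μ ≤ ∫⁻ x in T, g x ∂μ := by
  rw [← lintegral_indicator hS, ← lintegral_indicator hT,
    ← lintegral_add_right_eq_self (T.indicator g) z]
  refine lintegral_mono (indicator_le fun x hx => ?_)
  rw [indicator_of_mem (hST x hx)]

theorem measure_mul_setLIntegral_enorm_sq_le {X : Type*} [MeasurableSpace X] (μ : Measure X)
    {F : Type*} [NormedAddCommGroup F] {S Z : Set X} (hZ : MeasurableSet Z) (hZS : Z ⊆ S)
    {f : X → F} (hfZ : ∀ x ∈ Z, ‖f x‖ ≤ 1) :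
    μ Z * ∫⁻ x in S, ‖f x‖ₑ ^ 2 ∂μ ≤
      2 * μ S ^ 2 + 2 * ∫⁻ x in S, ∫⁻ y in S, ‖f y - f x‖ₑ ^ 2 ∂μ ∂μ := by
  have hpt : ∀ x, ∀ y ∈ Z, ‖f x‖ₑ ^ 2 ≤ 2 + 2 * ‖f y - f x‖ₑ ^ 2 := fun x y hy => by
    have hnorm : ‖f x‖ ≤ 1 + ‖f y - f x‖ := by
      linarith [norm_le_norm_add_norm_sub (f y) (f x), hfZ y hy]
    have hsq : ‖f x‖ ^ 2 ≤ 2 + 2 * ‖f y - f x‖ ^ 2 := by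
      nlinarith [norm_nonneg (f x), sq_nonneg (1 - ‖f y - f x‖)]
    simpa [ENNReal.ofReal_add, ENNReal.ofReal_mul, ENNReal.ofReal_pow] using
      ENNReal.ofReal_le_ofReal hsq
  calc μ Z * ∫⁻ x in S, ‖f x‖ₑ ^ 2 ∂μ
      ≤ ∫⁻ x in S, μ Z * ‖f x‖ₑ ^ 2 ∂μ := lintegral_const_mul_le _ _
    _ ≤ ∫⁻ x in S, (2 * μ S + 2 * ∫⁻ y in S, ‖f y - f x‖ₑ ^ 2 ∂μ) ∂μ := by
        refine lintegral_mono fun x => ?_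
        calc μ Z * ‖f x‖ₑ ^ 2 = ∫⁻ _ in Z, ‖f x‖ₑ ^ 2 ∂μ := by rw [setLIntegral_const, mul_comm]
          _ ≤ ∫⁻ y in Z, (2 + 2 * ‖f y - f x‖ₑ ^ 2) ∂μ := setLIntegral_mono' hZ (hpt x)
          _ ≤ ∫⁻ y in S, (2 + 2 * ‖f y - f x‖ₑ ^ 2) ∂μ := lintegral_mono_set hZS
          _ = _ := by
            rw [lintegral_add_left measurable_const, lintegral_const_mul' _ _ ENNReal.ofNat_ne_top,
              setLIntegral_const]
    _ = _ := by
        rw [lintegral_add_left measurable_const, setLIntegral_const, mul_assoc, ← sq,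
          lintegral_const_mul' _ _ ENNReal.ofNat_ne_top]

theorem setLIntegral_enorm_sq_eq_ofReal {X F : Type*} [TopologicalSpace X] [MeasurableSpace X]
    [OpensMeasurableSpace X] [T2Space X] (μ : Measure X) [IsFiniteMeasureOnCompacts μ]
    [NormedAddCommGroup F] {f : X → F} (hf : Continuous f) {S : Set X} (hS : IsCompact S) :
    ∫⁻ x in S, ‖f x‖ₑ ^ 2 ∂μ = ENNReal.ofReal (∫ x in S, ‖f x‖ ^ 2 ∂μ) := by
  rw [ofReal_integral_eq_lintegral_ofReal
    ((hf.norm.fun_pow 2).continuousOn.integrableOn_compact hS) (.of_forall fun x => sq_nonneg _)]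
  simp only [ENNReal.ofReal_pow (norm_nonneg _), ofReal_norm]

variable {E F : Type*} [NormedAddCommGroup E] [NormedSpace ℝ E] [NormedAddCommGroup F]
  [NormedSpace ℝ F]

theorem enorm_sub_sq_le_lintegral_enorm_fderiv [CompleteSpace F] {f : E → F} (hf : ContDiff ℝ 1 f)
    (x z : E) : ‖f (x + z) - f x‖ₑ ^ 2 ≤
      ‖z‖ₑ ^ 2 * ∫⁻ t in Ioc (0 : ℝ) 1, ‖fderiv ℝ f (x + t • z)‖ₑ ^ 2 := by
  have hcont : Continuous fun t : ℝ => fderiv ℝ f (x + t • z) :=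
    (hf.continuous_fderiv one_ne_zero).comp (by fun_prop)
  have hderiv : ∀ t : ℝ, HasDerivAt (fun t : ℝ => f (x + t • z)) (fderiv ℝ f (x + t • z) z) t := by
    intro t
    have hline : HasDerivAt (fun t : ℝ => x + t • z) z t := by
      simpa using ((hasDerivAt_id t).smul_const z).const_add x
    exact (hf.differentiable one_ne_zero _).hasFDerivAt.comp_hasDerivAt t hline
  have hftc : f (x + z) - f x = ∫ t in Ioc (0 : ℝ) 1, fderiv ℝ f (x + t • z) z := by
    rw [← intervalIntegral.integral_of_le zero_le_one,
      intervalIntegral.integral_eq_sub_of_hasDerivAt (fun t _ => hderiv t)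
        ((hcont.clm_apply continuous_const).intervalIntegrable _ _), one_smul, zero_smul, add_zero]
  have hle : ‖f (x + z) - f x‖ₑ ≤ (∫⁻ t in Ioc (0 : ℝ) 1, ‖fderiv ℝ f (x + t • z)‖ₑ) * ‖z‖ₑ := by
    rw [hftc, ← lintegral_mul_const' _ _ enorm_ne_top]
    exact (enorm_integral_le_lintegral_enorm _).trans
      (lintegral_mono fun t => ContinuousLinearMap.le_opENorm _ _)
  have : IsProbabilityMeasure (volume.restrict (Ioc (0 : ℝ) 1)) := ⟨by simp⟩
  calc ‖f (x + z) - f x‖ₑ ^ 2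
      ≤ ‖z‖ₑ ^ 2 * (∫⁻ t in Ioc (0 : ℝ) 1, ‖fderiv ℝ f (x + t • z)‖ₑ) ^ 2 := by
        rw [mul_comm, ← mul_pow]
        gcongr
    _ ≤ _ := by
        gcongr
        exact sq_lintegral_le_lintegral_sq hcont.enorm.aemeasurable

variable [MeasurableSpace E] [BorelSpace E] [FiniteDimensional ℝ E]
  (μ : Measure E) [μ.IsAddHaarMeasure]

theorem lintegral_closedBall_enorm_sub_sq_le [CompleteSpace F] {f : E → F} (hf : ContDiff ℝ 1 f)
    {r s : ℝ} {z : E} (hz : ‖z‖ ≤ s) :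
    ∫⁻ x in closedBall 0 r, ‖f (x + z) - f x‖ₑ ^ 2 ∂μ ≤
      ENNReal.ofReal s ^ 2 * ∫⁻ x in closedBall 0 (r + s), ‖fderiv ℝ f x‖ₑ ^ 2 ∂μ := by
  have hcont : Continuous fun x => ‖fderiv ℝ f x‖ₑ ^ 2 :=
    (ENNReal.continuous_pow 2).comp (hf.continuous_fderiv one_ne_zero).enorm
  have hshift : ∀ t ∈ Ioc (0 : ℝ) 1, ∀ x ∈ closedBall (0 : E) r,
      x + t • z ∈ closedBall (0 : E) (r + s) := fun t ht x hx => by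
    rw [mem_closedBall_zero_iff] at hx ⊢
    refine (norm_add_le _ _).trans (add_le_add hx ?_)
    rw [norm_smul, Real.norm_of_nonneg ht.1.le]
    exact (mul_le_of_le_one_left (norm_nonneg z) ht.2).trans hz
  calc ∫⁻ x in closedBall 0 r, ‖f (x + z) - f x‖ₑ ^ 2 ∂μ
      ≤ ∫⁻ x in closedBall 0 r, ‖z‖ₑ ^ 2 *
          (∫⁻ t in Ioc (0 : ℝ) 1, ‖fderiv ℝ f (x + t • z)‖ₑ ^ 2) ∂μ :=
        lintegral_mono fun x => enorm_sub_sq_le_lintegral_enorm_fderiv hf x z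
    _ = ‖z‖ₑ ^ 2 * ∫⁻ t in Ioc (0 : ℝ) 1,
          ∫⁻ x in closedBall 0 r, ‖fderiv ℝ f (x + t • z)‖ₑ ^ 2 ∂μ := by
        rw [lintegral_const_mul' _ _ (by simp), lintegral_lintegral_swap]
        exact (hcont.comp (by fun_prop : Continuous fun p : E × ℝ => p.1 + p.2 • z)).aemeasurable
    _ ≤ ‖z‖ₑ ^ 2 * ∫⁻ _ in Ioc (0 : ℝ) 1,
          ∫⁻ x in closedBall 0 (r + s), ‖fderiv ℝ f x‖ₑ ^ 2 ∂μ := by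
        refine mul_le_mul_right (setLIntegral_mono measurable_const fun t ht =>
          setLIntegral_comp_add_right_le measurableSet_closedBall measurableSet_closedBall
            (hshift t ht) _) _
    _ ≤ _ := by
        rw [setLIntegral_const, Real.volume_Ioc, sub_zero, ENNReal.ofReal_one, mul_one,
          ← ofReal_norm]
        gcongr

theorem lintegral_closedBall_lintegral_enorm_sub_sq_le [CompleteSpace F] {f : E → F}
    (hf : ContDiff ℝ 1 f) (r : ℝ) :
    ∫⁻ x in closedBall 0 r, ∫⁻ y in closedBall 0 r, ‖f y - f x‖ₑ ^ 2 ∂μ ∂μ ≤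
      μ (closedBall 0 (2 * r)) * (ENNReal.ofReal (2 * r) ^ 2 *
        ∫⁻ x in closedBall 0 (3 * r), ‖fderiv ℝ f x‖ₑ ^ 2 ∂μ) := by
  have hsub : ∀ x ∈ closedBall (0 : E) r, ∀ y ∈ closedBall (0 : E) r,
      y + -x ∈ closedBall (0 : E) (2 * r) := fun x hx y hy => by
    rw [mem_closedBall_zero_iff] at hx hy ⊢
    exact (norm_add_le _ _).trans (by rw [norm_neg]; linarith)
  calc ∫⁻ x in closedBall 0 r, ∫⁻ y in closedBall 0 r, ‖f y - f x‖ₑ ^ 2 ∂μ ∂μ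
      ≤ ∫⁻ x in closedBall 0 r, ∫⁻ z in closedBall 0 (2 * r), ‖f (x + z) - f x‖ₑ ^ 2 ∂μ ∂μ := by
        refine setLIntegral_mono' measurableSet_closedBall fun x hx => ?_
        simpa using setLIntegral_comp_add_right_le measurableSet_closedBall
          measurableSet_closedBall (hsub x hx) fun z => ‖f (x + z) - f x‖ₑ ^ 2
    _ = ∫⁻ z in closedBall 0 (2 * r), ∫⁻ x in closedBall 0 r, ‖f (x + z) - f x‖ₑ ^ 2 ∂μ ∂μ := by
        refine lintegral_lintegral_swap (Continuous.aemeasurable ?_)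
        exact (ENNReal.continuous_pow 2).comp ((hf.continuous.comp (by fun_prop :
          Continuous fun p : E × E => p.1 + p.2)).sub (hf.continuous.comp continuous_fst)).enorm
    _ ≤ ∫⁻ _ in closedBall (0 : E) (2 * r), ENNReal.ofReal (2 * r) ^ 2 *
          ∫⁻ x in closedBall 0 (r + 2 * r), ‖fderiv ℝ f x‖ₑ ^ 2 ∂μ ∂μ :=
        setLIntegral_mono' measurableSet_closedBall fun z hz =>
          lintegral_closedBall_enorm_sub_sq_le μ hf (mem_closedBall_zero_iff.1 hz)
    _ = _ := by
        rw [setLIntegral_const, mul_comm, show r + 2 * r = 3 * r by ring]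

theorem measureReal_mul_setIntegral_norm_sq_le [CompleteSpace F] {f : E → F}
    (hf : ContDiff ℝ 1 f) {r : ℝ} (hr : 0 ≤ r) {Z : Set E} (hZ : MeasurableSet Z)
    (hZr : Z ⊆ closedBall 0 r) (hfZ : ∀ x ∈ Z, ‖f x‖ ≤ 1) :
    μ.real Z * ∫ x in closedBall 0 r, ‖f x‖ ^ 2 ∂μ ≤
      2 * μ.real (closedBall 0 r) ^ 2 + 2 * (μ.real (closedBall 0 (2 * r)) *
        ((2 * r) ^ 2 * ∫ x in closedBall 0 (3 * r), ‖fderiv ℝ f x‖ ^ 2 ∂μ)) := by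
  have hle := (measure_mul_setLIntegral_enorm_sq_le μ hZ hZr hfZ).trans
    (add_le_add_right (mul_le_mul_right
      (lintegral_closedBall_lintegral_enorm_sub_sq_le μ hf r) 2) _)
  rw [setLIntegral_enorm_sq_eq_ofReal μ hf.continuous (isCompact_closedBall _ _),
    setLIntegral_enorm_sq_eq_ofReal μ (hf.continuous_fderiv one_ne_zero)
      (isCompact_closedBall _ _)] at hle
  have hball : ∀ s, μ (closedBall (0 : E) s) ≠ ⊤ := fun s => measure_closedBall_lt_top.ne
  have hleft : 2 * μ (closedBall 0 r) ^ 2 ≠ ⊤ :=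
    ENNReal.mul_ne_top ENNReal.ofNat_ne_top (ENNReal.pow_ne_top (hball r))
  have hright : ∀ I, 2 * (μ (closedBall 0 (2 * r)) * (ENNReal.ofReal (2 * r) ^ 2 *
      ENNReal.ofReal I)) ≠ ⊤ := fun I =>
    ENNReal.mul_ne_top ENNReal.ofNat_ne_top (ENNReal.mul_ne_top (hball _) (by finiteness))
  have hreal := ENNReal.toReal_mono (ENNReal.add_ne_top.2 ⟨hleft, hright _⟩) hle
  rw [ENNReal.toReal_add hleft (hright _)] at hreal
  simpa only [ENNReal.toReal_mul, ENNReal.toReal_pow, ENNReal.toReal_ofNat, Measure.real,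
    ENNReal.toReal_ofReal (show 0 ≤ 2 * r by positivity),
    ENNReal.toReal_ofReal (integral_nonneg fun _ : E => sq_nonneg _)] using hreal

end Poincare

section WeakHarnack

/-- The function `log (1 + 1 / t)` on `t > 0`. It is convex and decreasing with `g'² ≤ g''`, so it
turns a positive supersolution into a subsolution with the logarithmic energy estimate. -/
noncomputable def logRatio (t : ℝ) : ℝ := Real.log (t + 1) - Real.log t

theorem logRatio_pos {t : ℝ} (ht : 0 < t) : 0 < logRatio t :=
  sub_pos.2 (Real.log_lt_log ht (lt_add_one t))

theorem logRatio_le_one {t : ℝ} (ht : 1 ≤ t) : logRatio t ≤ 1 := by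
  have ht0 : 0 < t := by linarith
  rw [logRatio, ← Real.log_div (by positivity) ht0.ne']
  refine (Real.log_le_sub_one_of_pos (by positivity)).trans ?_
  rw [sub_le_iff_le_add, div_le_iff₀ ht0]
  linarith

theorem exp_neg_le_of_logRatio_le {t M : ℝ} (ht : 0 < t) (hM : logRatio t ≤ M) :
    Real.exp (-M) ≤ t := by
  rw [← Real.le_log_iff_exp_le ht]
  have : 0 ≤ Real.log (t + 1) := Real.log_nonneg (by linarith)
  rw [logRatio] at hM
  linarith

theorem hasDerivAt_logRatio {t : ℝ} (ht : 0 < t) :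
    HasDerivAt logRatio ((t + 1)⁻¹ - t⁻¹) t := by
  have hlog : HasDerivAt (fun t => Real.log (t + 1)) (t + 1)⁻¹ t := by
    simpa using ((hasDerivAt_id t).add_const 1).log (by positivity)
  exact hlog.sub (Real.hasDerivAt_log ht.ne')

theorem hasDerivAt_inv_add_one_sub_inv {t : ℝ} (ht : 0 < t) :
    HasDerivAt (fun t : ℝ => (t + 1)⁻¹ - t⁻¹) (t⁻¹ ^ 2 - (t + 1)⁻¹ ^ 2) t := by
  refine ((((hasDerivAt_id' t).add_const 1).fun_inv (by positivity)).fun_sub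
    (hasDerivAt_inv ht.ne')).congr_deriv ?_
  rw [inv_pow, inv_pow]
  ring

variable {n : ℕ} {Λ : ℝ} {a : 𝔼 n → Matrix (Fin n) (Fin n) ℝ}

theorem contDiff_logRatio_comp {v : 𝔼 n → ℝ} {k : WithTop ℕ∞} (hv : ContDiff ℝ k v)
    (hpos : ∀ x, 0 < v x) : ContDiff ℝ k fun x => logRatio (v x) :=
  ((hv.add contDiff_const).log fun x => by linarith [hpos x]).sub (hv.log fun x => (hpos x).ne')

theorem grad_comp {f : 𝔼 n → ℝ} {g : ℝ → ℝ} {g' : ℝ} {x : 𝔼 n} (hg : HasDerivAt g g' (f x))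
    (hf : DifferentiableAt ℝ f x) : grad (fun y => g (f y)) x = g' • grad f x :=
  funext fun i => pderiv_comp hg hf i

theorem IsDivFreeElliptic.dotProduct_grad_logRatio_le (ha : IsDivFreeElliptic Λ a) {v : 𝔼 n → ℝ}
    (hv : ContDiff ℝ 2 v) (hpos : ∀ x, 0 < v x) (hLv : ∀ x, ellipticOp a v x ≤ 0) (x : 𝔼 n) :
    grad (fun y => logRatio (v y)) x ⬝ᵥ a x *ᵥ grad (fun y => logRatio (v y)) x ≤
      ellipticOp a (fun y => logRatio (v y)) x := by
  rw [grad_comp (hasDerivAt_logRatio (hpos x)) (hv.differentiable two_ne_zero x),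
    ellipticOp_comp hv (fun y => hasDerivAt_logRatio (hpos y))
      (hasDerivAt_inv_add_one_sub_inv (hpos x))]
  simp only [Matrix.mulVec_smul, dotProduct_smul, smul_dotProduct, smul_eq_mul]
  have hquad : 0 ≤ grad v x ⬝ᵥ a x *ᵥ grad v x :=
    (Finset.sum_nonneg fun _ _ => mul_self_nonneg _).trans (ha.le_dotProduct_mulVec x _)
  have hinv : (v x + 1)⁻¹ ≤ (v x)⁻¹ := inv_anti₀ (hpos x) (by linarith)
  have hinv0 : 0 < (v x + 1)⁻¹ := inv_pos.2 (by linarith [hpos x])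
  have hfirst := mul_nonneg_of_nonpos_of_nonpos (sub_nonpos.2 hinv) (hLv x)
  have hsecond : 0 ≤ 2 * (v x + 1)⁻¹ * ((v x)⁻¹ - (v x + 1)⁻¹) *
      (grad v x ⬝ᵥ a x *ᵥ grad v x) :=
    mul_nonneg (mul_nonneg (by positivity) (sub_nonneg.2 hinv)) hquad
  linarith

theorem exists_setIntegral_norm_fderiv_sq_le (n : ℕ) (Λ : ℝ) {s : ℝ} (hs : 0 ≤ s) :
    ∃ D, ∀ a, IsDivFreeElliptic (n := n) Λ a → ∀ f : 𝔼 n → ℝ, ContDiff ℝ 2 f →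
      (∀ x, grad f x ⬝ᵥ a x *ᵥ grad f x ≤ ellipticOp a f x) →
      ∫ x in closedBall 0 s, ‖fderiv ℝ f x‖ ^ 2 ≤ D := by
  obtain ⟨K, -, hcutoff⟩ := exists_isCutoff (𝔼 n)
  obtain ⟨φ, hφ⟩ := hcutoff s (s + 1) hs (lt_add_one s)
  have hφ1 : ContDiff ℝ 1 φ := hφ.contDiff.of_le (by simp)
  refine ⟨4 * Λ * ∫ x, ‖fderiv ℝ φ x‖ ^ 2, fun a ha f hf hLf => ?_⟩
  calc ∫ x in closedBall 0 s, ‖fderiv ℝ f x‖ ^ 2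
      = ∫ x in closedBall 0 s, φ x ^ 2 * ‖fderiv ℝ f x‖ ^ 2 :=
        setIntegral_congr_fun measurableSet_closedBall fun x hx => by simp [hφ.eq_one x hx]
    _ ≤ ∫ x, φ x ^ 2 * ‖fderiv ℝ f x‖ ^ 2 :=
        setIntegral_le_integral (integrable_sq_mul_norm_fderiv_sq (hf.of_le one_le_two)
          hφ1.continuous hφ.hasCompactSupport) (.of_forall fun x => by positivity)
    _ ≤ 4 * Λ * ∫ x, ‖fderiv ℝ φ x‖ ^ 2 := ha.log_energy_le hf hLf hφ1 hφ.hasCompactSupport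

theorem exists_le_of_pos_supersolution (hn : 2 ≤ n) (hΛ : 0 ≤ Λ) {θ : ℝ} (hθ : 0 < θ) :
    ∃ c, 0 < c ∧ ∀ a, IsDivFreeElliptic (n := n) Λ a → ∀ v : 𝔼 n → ℝ, ContDiff ℝ 2 v →
      (∀ x, 0 < v x) → (∀ x, ellipticOp a v x ≤ 0) →
      θ ≤ volume.real ({x | 1 ≤ v x} ∩ closedBall 0 1) → c ≤ v 0 := by
  obtain ⟨K, hK, hmoser⟩ := exists_sq_le_mul_setIntegral hn hΛ
  obtain ⟨D, henergy⟩ := exists_setIntegral_norm_fderiv_sq_le n Λ (s := 3) (by norm_num)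
  set V : ℝ → ℝ := fun r => volume.real (closedBall (0 : 𝔼 n) r)
  set M := K * ((2 * V 1 ^ 2 + 2 * (V 2 * (2 ^ 2 * D))) / θ)
  refine ⟨Real.exp (-(M + 1)), Real.exp_pos _, fun a ha v hv hpos hLv hvol => ?_⟩
  set H := fun x => logRatio (v x)
  have hH : ContDiff ℝ 2 H := contDiff_logRatio_comp hv hpos
  have hHpos : ∀ x, 0 < H x := fun x => logRatio_pos (hpos x)
  have hLH := ha.dotProduct_grad_logRatio_le hv hpos hLv
  have hLH0 : ∀ x, 0 ≤ ellipticOp a H x := fun x =>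
    ((Finset.sum_nonneg fun _ _ => mul_self_nonneg _).trans
      (ha.le_dotProduct_mulVec x _)).trans (hLH x)
  have hpoincare := measureReal_mul_setIntegral_norm_sq_le volume (hH.of_le one_le_two) zero_le_one
    ((isClosed_le continuous_const hv.continuous).measurableSet.inter measurableSet_closedBall)
    inter_subset_right fun x hx => by
      rw [Real.norm_of_nonneg (hHpos x).le]
      exact logRatio_le_one hx.1
  have hmean : θ * ∫ x in closedBall 0 1, H x ^ 2 ≤ 2 * V 1 ^ 2 + 2 * (V 2 * (2 ^ 2 * D)) := by
    simp only [mul_one, Real.norm_eq_abs, sq_abs] at hpoincare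
    refine (mul_le_mul_of_nonneg_right hvol (integral_nonneg fun x => sq_nonneg _)).trans
      (hpoincare.trans ?_)
    gcongr
    exact henergy a ha H hH hLH
  have hsq : H 0 ^ 2 ≤ M := (hmoser a ha H hH hHpos hLH0).trans
    (mul_le_mul_of_nonneg_left ((le_div_iff₀' hθ).2 hmean) hK.le)
  exact exp_neg_le_of_logRatio_le (hpos 0) (by nlinarith : H 0 ≤ M + 1)

theorem exists_le_of_nonneg_supersolution (hn : 2 ≤ n) (hΛ : 0 ≤ Λ) {θ : ℝ} (hθ : 0 < θ) :
    ∃ c, 0 < c ∧ ∀ a, IsDivFreeElliptic (n := n) Λ a → ∀ v : 𝔼 n → ℝ, ContDiff ℝ 2 v →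
      (∀ x, 0 ≤ v x) → (∀ x, ellipticOp a v x ≤ 0) →
      θ ≤ volume.real ({x | 1 ≤ v x} ∩ closedBall 0 1) → c ≤ v 0 := by
  obtain ⟨c, hc, hharnack⟩ := exists_le_of_pos_supersolution hn hΛ hθ
  refine ⟨c, hc, fun a ha v hv hv0 hLv hvol => le_of_forall_pos_le_add fun η hη => ?_⟩
  have hshift : ∀ x, ellipticOp a (fun y => v y + η) x = ellipticOp a v x := fun x => by
    rw [ellipticOp_comp (g := fun t => t + η) (g' := fun _ => 1) hv
      (fun y => (hasDerivAt_id' (v y)).add_const η) (hasDerivAt_const (v x) 1)]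
    ring
  refine hharnack a ha (fun x => v x + η) (hv.add contDiff_const)
    (fun x => add_pos_of_nonneg_of_pos (hv0 x) hη) (fun x => (hshift x).trans_le (hLv x))
    (hvol.trans (measureReal_mono ?_ ?_))
  · exact inter_subset_inter_left _ fun x (hx : 1 ≤ v x) => by simpa using by linarith
  · exact ((measure_mono inter_subset_right).trans_lt measure_closedBall_lt_top).ne

end WeakHarnack

section MatrixCalculus

open scoped Matrix.Norms.Operator

variable {ι : Type*} [Fintype ι]

theorem contDiff_matrix {E : Type*} [NormedAddCommGroup E] [NormedSpace ℝ E] {k : WithTop ℕ∞}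
    {F : E → Matrix ι ι ℝ} : ContDiff ℝ k F ↔ ∀ i j, ContDiff ℝ k fun x => F x i j := by
  let e : Matrix ι ι ℝ ≃L[ℝ] (ι → ι → ℝ) := (Matrix.ofLinearEquiv ℝ).symm.toContinuousLinearEquiv
  rw [← e.comp_contDiff_iff, contDiff_pi]
  exact forall_congr' fun i => contDiff_pi

variable [DecidableEq ι]

theorem contDiff_det : ContDiff ℝ ∞ (Matrix.det : Matrix ι ι ℝ → ℝ) := by
  simp_rw [funext Matrix.det_apply']
  exact ContDiff.sum fun σ _ => contDiff_const.mul <|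
    contDiff_prod fun i _ => contDiff_matrix.1 contDiff_id (σ i) i

theorem contDiff_adjugate : ContDiff ℝ ∞ (Matrix.adjugate : Matrix ι ι ℝ → Matrix ι ι ℝ) := by
  refine contDiff_matrix.2 fun i j => ?_
  simp_rw [Matrix.adjugate_apply]
  refine contDiff_det.comp (contDiff_matrix.2 fun p q => ?_)
  obtain rfl | hp := eq_or_ne p j
  · simpa only [Matrix.updateRow_self] using contDiff_const
  · simpa only [Matrix.updateRow_ne hp] using contDiff_matrix.1 contDiff_fun_id p q

theorem fderiv_det (A B : Matrix ι ι ℝ) :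
    fderiv ℝ Matrix.det A B = (A.adjugate * B).trace := by
  let e : Matrix ι ι ℝ ≃L[ℝ] (ι → ι → ℝ) := (Matrix.ofLinearEquiv ℝ).symm.toContinuousLinearEquiv
  let F : ContinuousMultilinearMap ℝ (fun _ : ι => ι → ℝ) ℝ :=
    ⟨Matrix.detRowAlternating.toMultilinearMap, continuous_id.matrix_det⟩
  have hF : HasFDerivAt Matrix.det ((F.linearDeriv (e A)).comp (e : Matrix ι ι ℝ →L[ℝ] _)) A :=
    (F.hasFDerivAt (e A)).comp A e.hasFDerivAt
  have hcol : ∀ i, F (Function.update (e A) i (B i)) = ∑ j, A.adjugate j i * B i j := fun i => by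
    have : F (Function.update (e A) i (B i)) = (A.updateRow i (B i)).det := rfl
    rw [this, ← Matrix.cramer_transpose_apply, Matrix.cramer_eq_adjugate_mulVec,
      ← Matrix.adjugate_transpose]
    rfl
  calc fderiv ℝ Matrix.det A B = ∑ i, F (Function.update (e A) i (B i)) := by
        rw [hF.fderiv]
        exact F.linearDeriv_apply _ _
    _ = (A.adjugate * B).trace := by
        rw [Matrix.trace_mul_comm]
        simp only [hcol, Matrix.trace, Matrix.diag, Matrix.mul_apply, mul_comm (B _ _)]

theorem fderiv_adjugate_mul_add (A B : Matrix ι ι ℝ) :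
    fderiv ℝ Matrix.adjugate A B * A + A.adjugate * B = (A.adjugate * B).trace • 1 := by
  have hadj : DifferentiableAt ℝ Matrix.adjugate A :=
    contDiff_adjugate.differentiable (by simp) A
  have hdet : DifferentiableAt ℝ Matrix.det A := contDiff_det.differentiable (by simp) A
  have hprod := hadj.hasFDerivAt.mul' (hasFDerivAt_id A)
  have hsmul := (hdet.hasFDerivAt.smul_const (1 : Matrix ι ι ℝ)).congr_of_eventuallyEq
    (.of_forall Matrix.adjugate_mul)
  rw [← fderiv_det, add_comm]
  exact DFunLike.congr_fun (hprod.unique hsmul) B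

theorem adjugate_eq_det_smul_inv {A : Matrix ι ι ℝ} (hA : A.det ≠ 0) :
    A.adjugate = A.det • A⁻¹ := by
  rw [Matrix.inv_def, smul_smul, Ring.mul_inverse_cancel _ hA.isUnit, one_smul]

theorem fderiv_adjugate_of_det_ne_zero {A : Matrix ι ι ℝ} (hA : A.det ≠ 0) (B : Matrix ι ι ℝ) :
    fderiv ℝ Matrix.adjugate A B = A.det • ((A⁻¹ * B).trace • A⁻¹ - A⁻¹ * B * A⁻¹) :=
  calc fderiv ℝ Matrix.adjugate A B
      = fderiv ℝ Matrix.adjugate A B * A * A⁻¹ := by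
        rw [Matrix.mul_assoc, Matrix.mul_nonsing_inv _ hA.isUnit, Matrix.mul_one]
    _ = ((A.adjugate * B).trace • 1 - A.adjugate * B) * A⁻¹ := by
        rw [eq_sub_of_add_eq (fderiv_adjugate_mul_add A B)]
    _ = A.det • ((A⁻¹ * B).trace • A⁻¹ - A⁻¹ * B * A⁻¹) := by
        simp [adjugate_eq_det_smul_inv hA, Matrix.sub_mul, smul_sub, smul_smul]

theorem continuous_fderiv_adjugate_apply (B : Matrix ι ι ℝ) :
    Continuous fun A : Matrix ι ι ℝ => fderiv ℝ Matrix.adjugate A B :=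
  (contDiff_adjugate.continuous_fderiv (by simp)).clm_apply continuous_const

end MatrixCalculus

section Perturbation

variable {ι : Type*} [DecidableEq ι]

theorem posDef_add_smul_one {A : Matrix ι ι ℝ} (hA : A.PosSemidef) {t : ℝ} (ht : 0 < t) :
    (A + t • (1 : Matrix ι ι ℝ)).PosDef :=
  Matrix.PosDef.posSemidef_add hA (Matrix.PosDef.one.smul ht)

theorem tendsto_add_smul_one (A : Matrix ι ι ℝ) :
    Tendsto (fun t : ℝ => A + t • (1 : Matrix ι ι ℝ)) (𝓝[>] 0) (𝓝 A) := by
  have h : Continuous fun t : ℝ => A + t • (1 : Matrix ι ι ℝ) := by fun_prop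
  simpa using (h.tendsto 0).mono_left nhdsWithin_le_nhds

variable [Fintype ι]

theorem eventually_det_add_smul_one_ne_zero (A : Matrix ι ι ℝ) :
    ∀ᶠ t : ℝ in 𝓝[>] 0, (A + t • (1 : Matrix ι ι ℝ)).det ≠ 0 := by
  have hroots : {t : ℝ | (-A).charpoly.IsRoot t}.Finite :=
    Polynomial.finite_setOfPred_isRoot (-A).charpoly_monic.ne_zero
  have hle : 𝓝[>] (0 : ℝ) ≤ cofinite :=
    (nhdsWithin_mono _ fun t (ht : 0 < t) => ht.ne').trans (nhdsNE_le_cofinite 0)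
  filter_upwards [hle hroots.compl_mem_cofinite] with t ht hdet
  refine ht ?_
  rw [mem_ofPred_eq, Polynomial.IsRoot, Matrix.eval_charpoly, sub_neg_eq_add, add_comm,
    Matrix.scalar_apply, ← Matrix.smul_one_eq_diagonal, hdet]

end Perturbation

section Piola

open scoped Matrix.Norms.Operator

variable {ι : Type*} [Fintype ι] [DecidableEq ι]

theorem sum_fderiv_adjugate_apply_eq_zero (A : Matrix ι ι ℝ) {T : ι → Matrix ι ι ℝ}
    (hT : ∀ i, (T i).IsSymm) (hT' : ∀ i p q, T i p q = T p i q) (j : ι) :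
    ∑ i, fderiv ℝ Matrix.adjugate A (T i) i j = 0 := by
  have hunit : ∀ A : Matrix ι ι ℝ, A.det ≠ 0 → ∑ i, fderiv ℝ Matrix.adjugate A (T i) i j = 0 := by
    intro A hA
    simp_rw [fderiv_adjugate_of_det_ne_zero hA, Matrix.smul_apply, ← Finset.smul_sum,
      Matrix.sub_apply, Finset.sum_sub_distrib, Matrix.smul_apply, Matrix.trace, Matrix.diag,
      Matrix.mul_apply, smul_eq_mul, Finset.sum_mul]
    refine mul_eq_zero_of_right _ (sub_eq_zero.2 ?_)
    rw [Finset.sum_comm]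
    refine Finset.sum_congr rfl fun p _ => Finset.sum_congr rfl fun i _ =>
      Finset.sum_congr rfl fun q _ => ?_
    rw [hT' i q p, (hT q).apply p i, hT' q p i]
  have hlim : Tendsto (fun t : ℝ => ∑ i, fderiv ℝ Matrix.adjugate (A + t • 1) (T i) i j) (𝓝[>] 0)
      (𝓝 (∑ i, fderiv ℝ Matrix.adjugate A (T i) i j)) :=
    tendsto_finsetSum _ fun i _ =>
      (((continuous_fderiv_adjugate_apply (T i)).matrix_elem i j).tendsto A).comp
        (tendsto_add_smul_one A)
  refine tendsto_nhds_unique hlim (tendsto_const_nhds.congr' ?_)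
  filter_upwards [eventually_det_add_smul_one_ne_zero A] with t ht
  exact (hunit _ ht).symm

end Piola

section DiagonalInequality

variable {ι : Type*} [Fintype ι]

theorem sum_diag_le_sum {F : ι → ι → ℝ} (hF : ∀ i j, i ≠ j → 0 ≤ F i j + F j i) :
    ∑ i, F i i ≤ ∑ i, ∑ j, F i j := by
  classical
  have hdiag : ∑ i, ∑ j, (if i = j then 2 * F i i else 0) ≤ ∑ i, ∑ j, (F i j + F j i) := by
    refine Finset.sum_le_sum fun i _ => Finset.sum_le_sum fun j _ => ?_
    obtain rfl | hij := eq_or_ne i j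
    · simp [two_mul]
    · simpa [hij] using hF i j hij
  have hsymm : ∑ i, ∑ j, F j i = ∑ i, ∑ j, F i j := Finset.sum_comm
  simp only [Finset.sum_ite_eq, Finset.mem_univ, if_true, ← Finset.mul_sum,
    Finset.sum_add_distrib] at hdiag
  linarith

theorem neg_weighted_sq_le_mul {c s t : ℝ} (hs : 0 ≤ s) (ht : 0 ≤ t) (hc : c ^ 2 ≤ s * t)
    (x y : ℝ) : -((s * x ^ 2 + t * y ^ 2) / 2) ≤ c * (x * y) := by
  have hsq : (2 * (c * (x * y))) ^ 2 ≤ (s * x ^ 2 + t * y ^ 2) ^ 2 := by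
    have : c ^ 2 * (x * y) ^ 2 ≤ s * t * (x * y) ^ 2 := by gcongr
    nlinarith [sq_nonneg (s * x ^ 2 - t * y ^ 2)]
  linarith [(abs_le_of_sq_le_sq' hsq (by positivity)).1]

theorem sum_diag_mul_sq_sub_le {C : ι → ι → ℝ} {s : ι → ℝ} (hs : ∀ i, 0 ≤ s i)
    (hC : ∀ i j, i ≠ j → C i j ^ 2 ≤ s i * s j) (x : ι → ℝ) :
    ∑ i, C i i * x i ^ 2 - Fintype.card ι * ∑ i, s i * x i ^ 2 ≤
      ∑ i, ∑ j, C i j * (x i * x j) := by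
  have hdiag : ∑ i, (C i i * (x i * x i) + (s i * x i ^ 2 + s i * x i ^ 2) / 2) ≤
      ∑ i, ∑ j, (C i j * (x i * x j) + (s i * x i ^ 2 + s j * x j ^ 2) / 2) :=
    sum_diag_le_sum (F := fun i j => C i j * (x i * x j) + (s i * x i ^ 2 + s j * x j ^ 2) / 2)
      fun i j hij => by
        have h₁ := neg_weighted_sq_le_mul (hs i) (hs j) (hC i j hij) (x i) (x j)
        have h₂ := neg_weighted_sq_le_mul (hs j) (hs i) (hC j i hij.symm) (x j) (x i)
        linarith
  have hle : ∑ i, C i i * x i ^ 2 ≤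
      ∑ i, (C i i * (x i * x i) + (s i * x i ^ 2 + s i * x i ^ 2) / 2) :=
    Finset.sum_le_sum fun i _ => by nlinarith [mul_nonneg (hs i) (sq_nonneg (x i))]
  have hcard : ∑ i, ∑ j, (s i * x i ^ 2 + s j * x j ^ 2) / 2 =
      Fintype.card ι * ∑ i, s i * x i ^ 2 := by
    simp only [← Finset.sum_div, Finset.sum_add_distrib, Finset.sum_const, Finset.card_univ,
      nsmul_eq_mul, ← Finset.mul_sum]
    ring
  simp only [Finset.sum_add_distrib, hcard] at hdiag hle ⊢
  linarith

variable {B ε δ D : ℝ} {l : ι → ℝ}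

theorem diagonal_form_nonneg_of_weights (hδ : 0 < δ) (hD : 0 ≤ D) (hl : ∀ i, 0 < l i)
    {s : ι → ℝ} (hs : ∀ i, 0 ≤ s i) (hDs : ∀ i j, i ≠ j → (D / (l i * l j)) ^ 2 ≤ s i * s j)
    (hsl : ∀ i, Fintype.card ι * s i ≤ 2 / (l i + δ)) (x : ι → ℝ) :
    0 ≤ D * (∑ i, x i / l i) ^ 2 +
      ∑ i, (2 * (1 + D / l i) / (l i + δ) - D / (l i * l i)) * x i ^ 2 := by
  have hsq : D * (∑ i, x i / l i) ^ 2 = ∑ i, ∑ j, D / (l i * l j) * (x i * x j) := by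
    rw [sq, Finset.sum_mul_sum, Finset.mul_sum]
    refine Finset.sum_congr rfl fun i _ => ?_
    rw [Finset.mul_sum]
    exact Finset.sum_congr rfl fun j _ => by rw [div_mul_div_comm]; ring
  have hoff := sum_diag_mul_sq_sub_le hs hDs x
  have hdiag : Fintype.card ι * ∑ i, s i * x i ^ 2 ≤
      ∑ i, 2 * (1 + D / l i) / (l i + δ) * x i ^ 2 := by
    rw [Finset.mul_sum]
    refine Finset.sum_le_sum fun i _ => ?_
    rw [← mul_assoc]
    have hli := hl i
    have hDl : 0 ≤ D / l i := by positivity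
    exact mul_le_mul_of_nonneg_right ((hsl i).trans (by gcongr; linarith)) (sq_nonneg _)
  simp only [hsq, sub_mul, Finset.sum_sub_distrib]
  linarith

theorem diagonal_form_nonneg_of_le (hδ : 0 < δ) (hD : 0 ≤ D) (hl : ∀ i, δ ≤ l i) (x : ι → ℝ) :
    0 ≤ D * (∑ i, x i / l i) ^ 2 +
      ∑ i, (2 * (1 + D / l i) / (l i + δ) - D / (l i * l i)) * x i ^ 2 := by
  refine add_nonneg (by positivity) (Finset.sum_nonneg fun i _ => mul_nonneg ?_ (sq_nonneg _))
  have hli : 0 < l i := hδ.trans_le (hl i)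
  have hcoeff : 2 * (1 + D / l i) / (l i + δ) - D / (l i * l i) =
      (2 * l i ^ 2 + D * (l i - δ)) / (l i ^ 2 * (l i + δ)) := by
    field_simp
    ring
  have := mul_nonneg hD (sub_nonneg.2 (hl i))
  rw [hcoeff]
  positivity

/- If some `l k < δ`, then `l k` is so small that the factor `l k` in `D ≤ B * l i * l j * l k`
beats the off-diagonal terms not involving `k`; those involving `k` are absorbed by giving `k` the
large weight `B / ε`, which its diagonal coefficient `2 / (l k + δ)` can afford. -/
theorem diagonal_form_nonneg (hB : 0 ≤ B) (hε : 0 < ε) (hδ : 0 < δ)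
    (hBε : Fintype.card ι * B * ε ≤ 2 / 3) (hδε : δ ≤ ε) (hBδ : Fintype.card ι * B * δ ≤ ε)
    (hδ₁ : δ ≤ 1) (hl : ∀ i, 0 < l i) (hl₂ : ∀ i, l i ≤ 2) (hD : 0 ≤ D)
    (hDpair : ∀ i j, i ≠ j → D ≤ B * (l i * l j))
    (hDtriple : ∀ i j k, i ≠ j → i ≠ k → j ≠ k → D ≤ B * (l i * (l j * l k))) (x : ι → ℝ) :
    0 ≤ D * (∑ i, x i / l i) ^ 2 +
      ∑ i, (2 * (1 + D / l i) / (l i + δ) - D / (l i * l i)) * x i ^ 2 := by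
  classical
  by_cases! hall : ∀ i, δ ≤ l i
  · exact diagonal_form_nonneg_of_le hδ hD hall x
  obtain ⟨k, hk⟩ := hall
  refine diagonal_form_nonneg_of_weights hδ hD hl (s := fun i => if i = k then B / ε else B * ε)
    (fun i => by split_ifs <;> positivity) (fun i j hij => ?_) (fun i => ?_) x
  · have hli := hl i
    have hlj := hl j
    have hDB : D / (l i * l j) ≤ B := (div_le_iff₀ (by positivity)).2 (hDpair i j hij)
    have hDB₂ : (D / (l i * l j)) ^ 2 ≤ B ^ 2 := by gcongr
    obtain rfl | hik := eq_or_ne i k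
    · simpa [hij.symm, div_mul_eq_mul_div, mul_div_assoc, hε.ne', sq] using hDB₂
    obtain rfl | hjk := eq_or_ne j k
    · simpa [hij, mul_div_assoc, mul_assoc, mul_div_cancel₀, hε.ne', sq] using hDB₂
    · have hDBε : D / (l i * l j) ≤ B * ε := by
        rw [div_le_iff₀ (by positivity)]
        calc D ≤ B * (l i * (l j * l k)) := hDtriple i j k hij hik hjk
          _ ≤ B * (l i * (l j * ε)) := by gcongr; linarith
          _ = B * ε * (l i * l j) := by ring
      simp only [if_neg hik, if_neg hjk, ← sq]
      gcongr
  · have hli := hl i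
    rw [le_div_iff₀ (by positivity)]
    split_ifs with hik
    · subst hik
      calc Fintype.card ι * (B / ε) * (l i + δ) ≤ Fintype.card ι * (B / ε) * (δ + δ) := by gcongr
        _ = 2 * (Fintype.card ι * B * δ / ε) := by ring
        _ ≤ 2 * 1 := by gcongr; exact (div_le_one hε).2 hBδ
        _ = 2 := mul_one 2
    · calc Fintype.card ι * (B * ε) * (l i + δ) = Fintype.card ι * B * ε * (l i + δ) := by ring
        _ ≤ 2 / 3 * (2 + 1) := by gcongr; exact hl₂ i
        _ = 2 := by norm_num

theorem offDiagonal_coeff_nonneg {l m : ℝ} (hδ : 0 < δ) (hBδ : 2 * δ * B ≤ 1)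
    (hl : 0 < l) (hm : 0 < m) (hD : 0 ≤ D) (hDB : D ≤ B * (l * m)) :
    0 ≤ (2 * (1 + D / l) / (m + δ) - D / (l * m)) + (2 * (1 + D / m) / (l + δ) - D / (m * l)) := by
  have hsum :
      (2 * (1 + D / l) / (m + δ) - D / (l * m)) + (2 * (1 + D / m) / (l + δ) - D / (m * l)) =
        2 * (l * m * (l + m + 2 * δ) + D * (l * m - δ ^ 2)) / (l * m * (l + δ) * (m + δ)) := by
    field_simp
    ring
  have hlm : 0 < l * m := mul_pos hl hm
  have hDδ : D * δ ^ 2 ≤ l * m * (2 * δ) :=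
    calc D * δ ^ 2 ≤ B * (l * m) * δ ^ 2 := by gcongr
      _ = l * m * (δ * (δ * B)) := by ring
      _ ≤ l * m * (δ * 2) := by gcongr; linarith
      _ = l * m * (2 * δ) := by ring
  rw [hsum]
  refine div_nonneg (mul_nonneg zero_le_two ?_) (by positivity)
  nlinarith [mul_nonneg hD hlm.le, mul_pos hlm hl, mul_pos hlm hm]

theorem symm_form_nonneg (hB : 0 ≤ B) (hε : 0 < ε) (hδ : 0 < δ)
    (hBε : Fintype.card ι * B * ε ≤ 2 / 3) (hδε : δ ≤ ε) (hBδ : Fintype.card ι * B * δ ≤ ε)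
    (hδ₁ : δ ≤ 1) (hδB : 2 * δ * B ≤ 1) (hl : ∀ i, 0 < l i) (hl₂ : ∀ i, l i ≤ 2) (hD : 0 ≤ D)
    (hDpair : ∀ i j, i ≠ j → D ≤ B * (l i * l j))
    (hDtriple : ∀ i j k, i ≠ j → i ≠ k → j ≠ k → D ≤ B * (l i * (l j * l k)))
    {H : ι → ι → ℝ} (hH : ∀ i j, H i j = H j i) :
    0 ≤ D * (∑ i, H i i / l i) ^ 2 +
      ∑ i, ∑ j, (2 * (1 + D / l i) / (l j + δ) - D / (l i * l j)) * H i j ^ 2 := by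
  have hdiag := diagonal_form_nonneg hB hε hδ hBε hδε hBδ hδ₁ hl hl₂ hD hDpair hDtriple
    fun i => H i i
  refine hdiag.trans (add_le_add_right (sum_diag_le_sum
    (F := fun i j => (2 * (1 + D / l i) / (l j + δ) - D / (l i * l j)) * H i j ^ 2)
    fun i j hij => ?_) _)
  rw [hH j i, ← add_mul]
  exact mul_nonneg (offDiagonal_coeff_nonneg hδ hδB (hl i) (hl j) hD (hDpair i j hij))
    (sq_nonneg _)

end DiagonalInequality

section MatrixInequality

open scoped Matrix.Norms.Operator

variable {ι : Type*} [Fintype ι]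

theorem prod_le_pow_mul_prod {c : ℝ} (hc : 1 ≤ c) {l : ι → ℝ} (hl : ∀ i, 0 ≤ l i)
    (hlc : ∀ i, l i ≤ c) (s : Finset ι) : ∏ i, l i ≤ c ^ Fintype.card ι * ∏ i ∈ s, l i := by
  classical
  rw [← Finset.prod_mul_prod_compl s, mul_comm]
  refine mul_le_mul_of_nonneg_right ?_ (Finset.prod_nonneg fun i _ => hl i)
  calc ∏ i ∈ sᶜ, l i ≤ c ^ sᶜ.card := by
        rw [← Finset.prod_const]
        exact Finset.prod_le_prod (fun i _ => hl i) fun i _ => hlc i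
    _ ≤ c ^ Fintype.card ι := pow_le_pow_right₀ hc (Finset.card_le_univ _)

variable [DecidableEq ι]

/-- The quadratic form in `H` to which `L (e · (D²u + δ)⁻¹ e)` reduces at a point where
`D²u = A`, with `H` the derivative of `D²u` in the direction `(A + δ)⁻¹ e` and `L` the operator
with coefficients `1 + b adj (D²u)`. -/
noncomputable def resolventForm (b δ : ℝ) (A H : Matrix ι ι ℝ) : ℝ :=
  b * (fderiv ℝ Matrix.adjugate A H * H).trace +
    2 * ((1 + b • A.adjugate) * H * (A + δ • (1 : Matrix ι ι ℝ))⁻¹ * H).trace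

theorem resolventForm_of_det_ne_zero (b δ : ℝ) {A : Matrix ι ι ℝ} (hA : A.det ≠ 0)
    (H : Matrix ι ι ℝ) :
    resolventForm b δ A H =
      b * A.det * ((A⁻¹ * H).trace ^ 2 - (A⁻¹ * H * A⁻¹ * H).trace) +
        2 * ((1 + (b * A.det) • A⁻¹) * H * (A + δ • (1 : Matrix ι ι ℝ))⁻¹ * H).trace := by
  rw [resolventForm, fderiv_adjugate_of_det_ne_zero hA, adjugate_eq_det_smul_inv hA, smul_smul]
  simp only [Matrix.smul_mul, Matrix.sub_mul, Matrix.trace_smul, Matrix.trace_sub, smul_eq_mul]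
  ring

theorem trace_diagonal_mul_mul_diagonal_mul (d e : ι → ℝ) {H : Matrix ι ι ℝ} (hH : H.IsSymm) :
    (Matrix.diagonal d * H * Matrix.diagonal e * H).trace = ∑ i, ∑ j, d i * e j * H i j ^ 2 := by
  simp only [Matrix.trace, Matrix.diag, Matrix.mul_apply (M := _ * _ * _), Matrix.mul_diagonal,
    Matrix.diagonal_mul]
  exact Finset.sum_congr rfl fun i _ => Finset.sum_congr rfl fun j _ => by
    rw [hH.apply i j]; ring

theorem resolventForm_diagonal (b : ℝ) {δ : ℝ} (hδ : 0 < δ) {l : ι → ℝ} (hl : ∀ i, 0 < l i)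
    {H : Matrix ι ι ℝ} (hH : H.IsSymm) :
    resolventForm b δ (Matrix.diagonal l) H =
      (b * ∏ i, l i) * (∑ i, H i i / l i) ^ 2 +
        ∑ i, ∑ j, (2 * (1 + (b * ∏ i, l i) / l i) / (l j + δ) - (b * ∏ i, l i) / (l i * l j)) *
          H i j ^ 2 := by
  have hinv : ∀ {m : ι → ℝ}, (∀ i, 0 < m i) → (Matrix.diagonal m)⁻¹ = Matrix.diagonal m⁻¹ :=
    fun {m} hm => Matrix.inv_eq_right_inv <| by
      simp [Matrix.diagonal_mul_diagonal, (hm _).ne']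
  have hshift : Matrix.diagonal l + δ • (1 : Matrix ι ι ℝ) = Matrix.diagonal fun i => l i + δ := by
    rw [Matrix.smul_one_eq_diagonal, Matrix.diagonal_add]
  have hcoeff : 1 + (b * ∏ i, l i) • Matrix.diagonal l⁻¹ =
      Matrix.diagonal fun i => 1 + (b * ∏ i, l i) / l i := by
    rw [← Matrix.diagonal_one, ← Matrix.diagonal_smul, Matrix.diagonal_add]
    rfl
  have htrace : (Matrix.diagonal l⁻¹ * H).trace = ∑ i, H i i / l i := by
    simp [Matrix.trace, Matrix.diagonal_mul, div_eq_inv_mul]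
  rw [resolventForm_of_det_ne_zero _ _ (Matrix.PosDef.diagonal hl).det_pos.ne', hshift,
    hinv hl, hinv fun i => add_pos (hl i) hδ, Matrix.det_diagonal, hcoeff, htrace,
    trace_diagonal_mul_mul_diagonal_mul _ _ hH, trace_diagonal_mul_mul_diagonal_mul _ _ hH,
    mul_sub, sub_add, sub_eq_add_neg, neg_sub, Finset.mul_sum, Finset.mul_sum,
    ← Finset.sum_sub_distrib]
  congr 1
  refine Finset.sum_congr rfl fun i _ => ?_
  rw [Finset.mul_sum, Finset.mul_sum, ← Finset.sum_sub_distrib]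
  refine Finset.sum_congr rfl fun j _ => ?_
  simp only [Pi.inv_apply, div_eq_mul_inv, mul_inv]
  ring

theorem trace_conjStarAlgAut (U : Matrix.unitaryGroup ι ℝ) (A : Matrix ι ι ℝ) :
    (Unitary.conjStarAlgAut ℝ (Matrix ι ι ℝ) U A).trace = A.trace := by
  rw [Unitary.conjStarAlgAut_apply, Matrix.trace_mul_comm, ← mul_assoc,
    Unitary.coe_star_mul_self, one_mul]

theorem det_conjStarAlgAut (U : Matrix.unitaryGroup ι ℝ) (A : Matrix ι ι ℝ) :
    (Unitary.conjStarAlgAut ℝ (Matrix ι ι ℝ) U A).det = A.det := by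
  rw [Unitary.conjStarAlgAut_apply, Matrix.det_mul_right_comm, ← Unitary.coe_star,
    Unitary.coe_mul_star_self, one_mul]

theorem inv_conjStarAlgAut (U : Matrix.unitaryGroup ι ℝ) {A : Matrix ι ι ℝ} (hA : A.det ≠ 0) :
    (Unitary.conjStarAlgAut ℝ (Matrix ι ι ℝ) U A)⁻¹ = Unitary.conjStarAlgAut ℝ _ U A⁻¹ :=
  Matrix.inv_eq_right_inv <| by
    rw [← map_mul, Matrix.mul_nonsing_inv _ hA.isUnit, map_one]

theorem resolventForm_conjStarAlgAut (b : ℝ) {δ : ℝ} (hδ : 0 < δ) (U : Matrix.unitaryGroup ι ℝ)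
    {A : Matrix ι ι ℝ} (hA : A.PosDef) (H : Matrix ι ι ℝ) :
    resolventForm b δ (Unitary.conjStarAlgAut ℝ _ U A) (Unitary.conjStarAlgAut ℝ _ U H) =
      resolventForm b δ A H := by
  have hdet := hA.det_pos.ne'
  have hdetδ := (posDef_add_smul_one hA.posSemidef hδ).det_pos.ne'
  have hshift : Unitary.conjStarAlgAut ℝ _ U A + δ • (1 : Matrix ι ι ℝ) =
      Unitary.conjStarAlgAut ℝ _ U (A + δ • 1) := by rw [map_add, map_smul, map_one]
  have hcoeff : 1 + (b * A.det) • Unitary.conjStarAlgAut ℝ _ U A⁻¹ =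
      Unitary.conjStarAlgAut ℝ _ U (1 + (b * A.det) • A⁻¹) := by rw [map_add, map_smul, map_one]
  rw [resolventForm_of_det_ne_zero _ _ hdet,
    resolventForm_of_det_ne_zero _ _ (by rwa [det_conjStarAlgAut]), hshift,
    inv_conjStarAlgAut U hdet, inv_conjStarAlgAut U hdetδ, det_conjStarAlgAut, hcoeff]
  simp only [← map_mul, trace_conjStarAlgAut]

theorem exists_eq_conjStarAlgAut_diagonal {A : Matrix ι ι ℝ} (hA : A.PosSemidef) :
    ∃ (U : Matrix.unitaryGroup ι ℝ) (l : ι → ℝ), (∀ i, 0 ≤ l i) ∧ (∀ i, l i ≤ A.trace) ∧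
      A = Unitary.conjStarAlgAut ℝ _ U (Matrix.diagonal l) := by
  refine ⟨hA.isHermitian.eigenvectorUnitary, hA.isHermitian.eigenvalues, hA.eigenvalues_nonneg,
    fun i => ?_, hA.isHermitian.spectral_theorem⟩
  rw [hA.isHermitian.trace_eq_sum_eigenvalues]
  exact Finset.single_le_sum (fun j _ => hA.eigenvalues_nonneg j) (Finset.mem_univ i)

theorem resolventForm_nonneg_of_posDef {b ε δ : ℝ} (hb : 0 ≤ b) (hε : 0 < ε) (hδ : 0 < δ)
    (hBε : Fintype.card ι * (b * 2 ^ Fintype.card ι) * ε ≤ 2 / 3) (hδε : δ ≤ ε)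
    (hBδ : Fintype.card ι * (b * 2 ^ Fintype.card ι) * δ ≤ ε) (hδ₁ : δ ≤ 1)
    (hδB : 2 * δ * (b * 2 ^ Fintype.card ι) ≤ 1) {A H : Matrix ι ι ℝ} (hA : A.PosDef)
    (htr : A.trace ≤ 2) (hH : H.IsSymm) : 0 ≤ resolventForm b δ A H := by
  obtain ⟨U, l, hl₀, hlA, rfl⟩ := exists_eq_conjStarAlgAut_diagonal hA.posSemidef
  have hl : ∀ i, 0 < l i := fun i => by
    have hdet := hA.det_pos.ne'
    rw [det_conjStarAlgAut, Matrix.det_diagonal] at hdet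
    exact (hl₀ i).lt_of_ne' (Finset.prod_ne_zero_iff.1 hdet i (Finset.mem_univ i))
  obtain ⟨H, rfl⟩ : ∃ H', Unitary.conjStarAlgAut ℝ (Matrix ι ι ℝ) U H' = H :=
    ⟨_, StarAlgEquiv.apply_symm_apply _ H⟩
  have hH' : H.IsSymm := by
    have hstar : star (Unitary.conjStarAlgAut ℝ (Matrix ι ι ℝ) U H) =
        Unitary.conjStarAlgAut ℝ (Matrix ι ι ℝ) U H := hH
    rw [← map_star] at hstar
    exact (Unitary.conjStarAlgAut ℝ (Matrix ι ι ℝ) U).injective hstar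
  have hl₂ : ∀ i, l i ≤ 2 := fun i => (hlA i).trans htr
  have hprod : ∀ s : Finset ι, b * ∏ i, l i ≤ b * 2 ^ Fintype.card ι * ∏ i ∈ s, l i := fun s => by
    rw [mul_assoc]
    exact mul_le_mul_of_nonneg_left
      (prod_le_pow_mul_prod one_le_two hl₀ hl₂ s) hb
  rw [resolventForm_conjStarAlgAut b hδ U (.diagonal hl), resolventForm_diagonal b hδ hl hH']
  refine symm_form_nonneg (by positivity) hε hδ hBε hδε hBδ hδ₁ hδB hl hl₂
    (mul_nonneg hb (Finset.prod_nonneg fun i _ => hl₀ i)) (fun i j hij => ?_)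
    (fun i j k hij hik hjk => ?_) fun i j => hH'.apply j i
  · simpa [Finset.prod_pair hij] using hprod {i, j}
  · simpa [Finset.prod_insert, hij, hik, hjk] using hprod {i, j, k}

theorem eventually_posDef_and_trace_le {A : Matrix ι ι ℝ} (hA : A.PosSemidef) {c : ℝ}
    (hc : A.trace < c) :
    ∀ᶠ t : ℝ in 𝓝[>] 0, (A + t • (1 : Matrix ι ι ℝ)).PosDef ∧
      (A + t • (1 : Matrix ι ι ℝ)).trace ≤ c := by
  have hlim : Tendsto (fun t : ℝ => (A + t • (1 : Matrix ι ι ℝ)).trace) (𝓝[>] 0) (𝓝 A.trace) :=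
    (continuous_id.matrix_trace.tendsto A).comp (tendsto_add_smul_one A)
  filter_upwards [self_mem_nhdsWithin, hlim.eventually_le_const hc] with t ht htr
  exact ⟨posDef_add_smul_one hA ht, htr⟩

theorem continuousAt_resolventForm (b : ℝ) {δ : ℝ} {A : Matrix ι ι ℝ}
    (hA : (A + δ • (1 : Matrix ι ι ℝ)).det ≠ 0) (H : Matrix ι ι ℝ) :
    ContinuousAt (fun A => resolventForm b δ A H) A := by
  have hinv : ContinuousAt (fun A : Matrix ι ι ℝ => (A + δ • (1 : Matrix ι ι ℝ))⁻¹) A :=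
    (continuousAt_matrix_inv _ (by simpa using continuousAt_inv₀ hA)).comp
      (f := fun A : Matrix ι ι ℝ => A + δ • (1 : Matrix ι ι ℝ)) (by fun_prop)
  have hadj : Continuous fun A : Matrix ι ι ℝ => (1 + b • A.adjugate) * H :=
    (continuous_const.add (continuous_id.matrix_adjugate.const_smul b)).matrix_mul continuous_const
  have hfst : Continuous fun A : Matrix ι ι ℝ => (fderiv ℝ Matrix.adjugate A H * H).trace :=
    ((continuous_fderiv_adjugate_apply H).matrix_mul continuous_const).matrix_trace
  have hsnd : ContinuousAt (fun A : Matrix ι ι ℝ =>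
      ((1 + b • A.adjugate) * H * (A + δ • (1 : Matrix ι ι ℝ))⁻¹ * H).trace) A :=
    (continuous_id.matrix_trace (R := ℝ)).continuousAt.comp
      ((hadj.continuousAt.mul hinv).mul continuousAt_const)
  exact (hfst.continuousAt.const_mul b).add (hsnd.const_mul 2)

theorem exists_resolventForm_nonneg {b : ℝ} (hb : 0 ≤ b) :
    ∃ δ, 0 < δ ∧ ∀ A H : Matrix ι ι ℝ, A.PosSemidef → A.trace ≤ 1 → H.IsSymm →
      0 ≤ resolventForm b δ A H := by
  set B := b * 2 ^ Fintype.card ι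
  set Q := Fintype.card ι * B + B + 1
  have hB₀ : 0 ≤ B := by positivity
  have hNB : 0 ≤ Fintype.card ι * B := by positivity
  have hQ₁ : 1 ≤ Q := by linarith
  have : 0 < Q := by linarith
  have hεQ : 1 / (2 * Q) * Q = 1 / 2 := by field_simp
  have hδQ : 1 / (2 * Q ^ 2) * Q = 1 / (2 * Q) := by field_simp
  set ε := 1 / (2 * Q)
  set δ := 1 / (2 * Q ^ 2)
  have hε : 0 < ε := by positivity
  have hδ : 0 < δ := by positivity
  have hε₁ : ε ≤ 1 / 2 := by nlinarith
  have hδε : δ ≤ ε := by nlinarith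
  refine ⟨δ, hδ, fun A H hA htr hH => ?_⟩
  have hlim : Tendsto (fun t : ℝ => resolventForm b δ (A + t • 1) H) (𝓝[>] 0)
      (𝓝 (resolventForm b δ A H)) :=
    (continuousAt_resolventForm b (posDef_add_smul_one hA hδ).det_pos.ne' H).tendsto.comp
      (tendsto_add_smul_one A)
  refine ge_of_tendsto hlim ?_
  filter_upwards [eventually_posDef_and_trace_le hA (htr.trans_lt one_lt_two)]
    with t ⟨hpos, htr₂⟩
  exact resolventForm_nonneg_of_posDef hb hε hδ (by nlinarith) hδε (by nlinarith) (by linarith)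
    (by nlinarith) hpos htr₂ hH

theorem adjugate_conjStarAlgAut (U : Matrix.unitaryGroup ι ℝ) (A : Matrix ι ι ℝ) :
    (Unitary.conjStarAlgAut ℝ (Matrix ι ι ℝ) U A).adjugate =
      Unitary.conjStarAlgAut ℝ _ U A.adjugate := by
  have hU : (U : Matrix ι ι ℝ) * star (U : Matrix ι ι ℝ) = 1 := by
    rw [← Unitary.coe_star, Unitary.coe_mul_star_self]
  have hU' : star (U : Matrix ι ι ℝ) * U = 1 := Unitary.coe_star_mul_self U
  have hdet : (U : Matrix ι ι ℝ).det * (star (U : Matrix ι ι ℝ)).det = 1 := by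
    rw [← Matrix.det_mul, hU, Matrix.det_one]
  have hadj : ∀ {V W : Matrix ι ι ℝ}, V * W = 1 → V.adjugate = V.det • W := fun {V W} h => by
    rw [adjugate_eq_det_smul_inv fun h₀ => by simpa [h₀] using congrArg Matrix.det h,
      Matrix.inv_eq_right_inv h]
  rw [Unitary.conjStarAlgAut_apply, Unitary.conjStarAlgAut_apply, Matrix.adjugate_mul_distrib,
    Matrix.adjugate_mul_distrib, hadj hU, hadj hU', Matrix.smul_mul, Matrix.mul_smul,
    Matrix.mul_smul, smul_smul, mul_comm, hdet, one_smul, mul_assoc]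

theorem posSemidef_conjStarAlgAut (U : Matrix.unitaryGroup ι ℝ) {A : Matrix ι ι ℝ}
    (hA : A.PosSemidef) : (Unitary.conjStarAlgAut ℝ (Matrix ι ι ℝ) U A).PosSemidef :=
  hA.mul_mul_conjTranspose_same _

theorem posSemidef_adjugate {A : Matrix ι ι ℝ} (hA : A.PosSemidef) : A.adjugate.PosSemidef := by
  obtain ⟨U, l, hl, -, rfl⟩ := exists_eq_conjStarAlgAut_diagonal hA
  rw [adjugate_conjStarAlgAut, Matrix.adjugate_diagonal]
  exact posSemidef_conjStarAlgAut U <| Matrix.PosSemidef.diagonal fun i =>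
    Finset.prod_nonneg fun j _ => hl j

theorem posSemidef_one_sub_adjugate {A : Matrix ι ι ℝ} (hA : A.PosSemidef) (htr : A.trace ≤ 1) :
    (1 - A.adjugate).PosSemidef := by
  obtain ⟨U, l, hl, hlA, rfl⟩ := exists_eq_conjStarAlgAut_diagonal hA
  rw [adjugate_conjStarAlgAut, Matrix.adjugate_diagonal,
    ← map_one (Unitary.conjStarAlgAut ℝ (Matrix ι ι ℝ) U), ← map_sub, ← Matrix.diagonal_one,
    Matrix.diagonal_sub]
  exact posSemidef_conjStarAlgAut U <| Matrix.PosSemidef.diagonal fun i =>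
    sub_nonneg.2 <| Finset.prod_le_one (fun j _ => hl j) fun j _ => (hlA j).trans htr

end MatrixInequality

section MatrixValuedFunctions

open scoped Matrix.Norms.Operator

theorem pderiv_linearMap_comp {E G : Type*} [NormedAddCommGroup E] [NormedSpace ℝ E]
    [FiniteDimensional ℝ E] [NormedAddCommGroup G] [NormedSpace ℝ G] (L : E →ₗ[ℝ] G) {n : ℕ}
    {f : 𝔼 n → E} {x : 𝔼 n} (hf : DifferentiableAt ℝ f x) (k : Fin n) :
    pderiv k (fun y => L (f y)) x = L (pderiv k f x) := by
  have := pderiv_fderiv_comp (g := L.toContinuousLinearMap)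
    L.toContinuousLinearMap.differentiableAt hf k
  rwa [ContinuousLinearMap.fderiv] at this

variable {ι : Type*} [Fintype ι] {n : ℕ} {F : 𝔼 n → Matrix ι ι ℝ} {x : 𝔼 n}

theorem pderiv_matrix_apply (hF : DifferentiableAt ℝ F x) (k : Fin n) (i j : ι) :
    pderiv k F x i j = pderiv k (fun y => F y i j) x :=
  (pderiv_linearMap_comp (Matrix.entryLinearMap ℝ ℝ i j) hF k).symm

theorem pderiv_trace (hF : DifferentiableAt ℝ F x) (k : Fin n) :
    pderiv k (fun y => (F y).trace) x = (pderiv k F x).trace :=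
  pderiv_linearMap_comp (Matrix.traceLinearMap ι ℝ ℝ) hF k

theorem pderiv_trace_mul {G : 𝔼 n → Matrix ι ι ℝ} (hF : DifferentiableAt ℝ F x)
    (hG : DifferentiableAt ℝ G x) (k : Fin n) :
    pderiv k (fun y => (F y * G y).trace) x =
      (pderiv k F x * G x).trace + (F x * pderiv k G x).trace := by
  classical
  rw [← Matrix.trace_add]
  exact (pderiv_trace (hF.mul hG) k).trans (congrArg Matrix.trace (pderiv_mul hF hG k))

theorem pderiv_dotProduct_mulVec (hF : DifferentiableAt ℝ F x) (e : ι → ℝ) (k : Fin n) :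
    pderiv k (fun y => e ⬝ᵥ F y *ᵥ e) x = e ⬝ᵥ pderiv k F x *ᵥ e :=
  pderiv_linearMap_comp
    { toFun := fun A => e ⬝ᵥ A *ᵥ e
      map_add' := fun A B => by rw [Matrix.add_mulVec, dotProduct_add]
      map_smul' := fun c A => by rw [Matrix.smul_mulVec, dotProduct_smul, RingHom.id_apply] } hF k

variable [DecidableEq ι]

theorem pderiv_det (hF : DifferentiableAt ℝ F x) (k : Fin n) :
    pderiv k (fun y => (F y).det) x = ((F x).adjugate * pderiv k F x).trace :=
  (pderiv_fderiv_comp (contDiff_det.differentiable (by simp) _) hF k).trans (fderiv_det _ _)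

theorem pderiv_adjugate (hF : DifferentiableAt ℝ F x) (k : Fin n) :
    pderiv k (fun y => (F y).adjugate) x = fderiv ℝ Matrix.adjugate (F x) (pderiv k F x) :=
  pderiv_fderiv_comp (contDiff_adjugate.differentiable (by simp) _) hF k

theorem hasFDerivAt_matrix_inv {A : Matrix ι ι ℝ} (hA : A.det ≠ 0) :
    HasFDerivAt (fun A : Matrix ι ι ℝ => A⁻¹)
      (-ContinuousLinearMap.mulLeftRight ℝ (Matrix ι ι ℝ) A⁻¹ A⁻¹) A := by
  have : CompleteSpace (Matrix ι ι ℝ) := FiniteDimensional.complete ℝ _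
  obtain ⟨U, rfl⟩ := (Matrix.isUnit_iff_isUnit_det A).2 hA.isUnit
  rw [← Matrix.coe_units_inv]
  exact (hasFDerivAt_ringInverse U).congr_of_eventuallyEq
    (.of_forall fun A => A.nonsing_inv_eq_ringInverse)

theorem contDiffAt_matrix_inv {A : Matrix ι ι ℝ} (hA : A.det ≠ 0) :
    ContDiffAt ℝ ∞ (fun A : Matrix ι ι ℝ => A⁻¹) A := by
  simp_rw [Matrix.inv_def, Ring.inverse_eq_inv]
  exact (contDiff_det.contDiffAt.inv hA).smul contDiff_adjugate.contDiffAt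

theorem pderiv_matrix_inv (hF : DifferentiableAt ℝ F x) (hdet : (F x).det ≠ 0) (k : Fin n) :
    pderiv k (fun y => (F y)⁻¹) x = -((F x)⁻¹ * pderiv k F x * (F x)⁻¹) := by
  have h := hasFDerivAt_matrix_inv hdet
  rw [pderiv_fderiv_comp h.differentiableAt hF, h.fderiv]
  rfl

end MatrixValuedFunctions

section HessianDerivatives

open scoped Matrix.Norms.Operator

variable {n : ℕ} {u : 𝔼 n → ℝ}

theorem Hess_eq_pderiv (hu : ContDiff ℝ 2 u) :
    Hess n u = fun x => Matrix.of fun i j => pderiv i (pderiv j u) x :=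
  funext fun x => Matrix.ext fun i j => Hess_apply hu x i j

theorem ellipticOp_eq_trace_mul_Hess {a : 𝔼 n → Matrix (Fin n) (Fin n) ℝ} (hu : ContDiff ℝ 2 u)
    (x : 𝔼 n) : ellipticOp a u x = (a x * Hess n u x).trace := by
  simp only [ellipticOp, Matrix.trace, Matrix.diag, Matrix.mul_apply, Hess_apply hu]
  exact Finset.sum_congr rfl fun i _ => Finset.sum_congr rfl fun j _ => by rw [pderiv_comm hu]

theorem isSymm_Hess (hu : ContDiff ℝ 2 u) (x : 𝔼 n) : (Hess n u x).IsSymm :=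
  Matrix.IsSymm.ext fun i j => by rw [Hess_apply hu, Hess_apply hu, pderiv_comm hu]

theorem contDiff_Hess {m k : WithTop ℕ∞} (hu : ContDiff ℝ k u) (hmk : m + 1 + 1 ≤ k) :
    ContDiff ℝ m (Hess n u) := by
  have h₂ : ContDiff ℝ 2 u := hu.of_le <| by
    rw [← one_add_one_eq_two]
    exact (add_le_add_left (le_add_left le_rfl) 1).trans hmk
  rw [Hess_eq_pderiv h₂]
  exact contDiff_matrix.2 fun i j => contDiff_pderiv (contDiff_pderiv hu hmk j) le_rfl i

theorem pderiv_Hess_apply (hu : ContDiff ℝ 3 u) (k i j : Fin n) (x : 𝔼 n) :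
    pderiv k (Hess n u) x i j = pderiv k (pderiv i (pderiv j u)) x := by
  have hdiff := (contDiff_Hess (m := 1) hu (by norm_num)).differentiable one_ne_zero x
  rw [pderiv_matrix_apply hdiff]
  simp_rw [Hess_apply (hu.of_le (by norm_num))]

theorem pderiv_pderiv_Hess_apply (hu : ContDiff ℝ 4 u) (k l i j : Fin n) (x : 𝔼 n) :
    pderiv k (pderiv l (Hess n u)) x i j = pderiv k (pderiv l (pderiv i (pderiv j u))) x := by
  have hdiff := (contDiff_pderiv (contDiff_Hess (m := 2) hu (by norm_num)) (m := 1)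
    (by norm_num) l).differentiable one_ne_zero x
  rw [pderiv_matrix_apply hdiff]
  simp_rw [pderiv_Hess_apply (hu.of_le (by norm_num))]

theorem isSymm_pderiv_Hess (hu : ContDiff ℝ 3 u) (k : Fin n) (x : 𝔼 n) :
    (pderiv k (Hess n u) x).IsSymm :=
  Matrix.IsSymm.ext fun i j => by
    rw [pderiv_Hess_apply hu, pderiv_Hess_apply hu, pderiv_comm (hu.of_le (by norm_num))]

theorem pderiv_Hess_comm (hu : ContDiff ℝ 3 u) (i j k : Fin n) (x : 𝔼 n) :
    pderiv i (Hess n u) x j k = pderiv j (Hess n u) x i k := by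
  rw [pderiv_Hess_apply hu, pderiv_Hess_apply hu,
    pderiv_comm (contDiff_pderiv hu (by norm_num) k)]

theorem pderiv_pderiv_Hess_comm (hu : ContDiff ℝ 4 u) (i j k l : Fin n) (x : 𝔼 n) :
    pderiv i (pderiv j (Hess n u)) x k l = pderiv k (pderiv l (Hess n u)) x i j := by
  have hu₁ : ∀ i, ContDiff ℝ 3 (pderiv i u) := contDiff_pderiv hu (by norm_num)
  have hu₂ : ∀ i j, ContDiff ℝ 2 (pderiv i (pderiv j u)) := fun i j =>
    contDiff_pderiv (hu₁ j) (by norm_num) i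
  rw [pderiv_pderiv_Hess_apply hu, pderiv_pderiv_Hess_apply hu,
    pderiv_comm ((hu₁ l).of_le (by norm_num)) j k, pderiv_comm (hu₂ j l) i k,
    pderiv_comm (hu.of_le (m := 2) (by norm_num)) j l,
    pderiv_comm ((hu₁ j).of_le (by norm_num)) i l]

/-- The derivative of `D²u` at `x` in the direction `v`. -/
noncomputable def dirDerivHess (u : 𝔼 n → ℝ) (x : 𝔼 n) (v : Fin n → ℝ) :
    Matrix (Fin n) (Fin n) ℝ :=
  ∑ p, v p • pderiv p (Hess n u) x

theorem isSymm_dirDerivHess (hu : ContDiff ℝ 3 u) (x : 𝔼 n) (v : Fin n → ℝ) :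
    (dirDerivHess u x v).IsSymm := by
  simp only [dirDerivHess, Matrix.IsSymm, Matrix.transpose_sum, Matrix.transpose_smul,
    (isSymm_pderiv_Hess hu _ x).eq]

theorem pderiv_Hess_mulVec (hu : ContDiff ℝ 3 u) (x : 𝔼 n) (v : Fin n → ℝ) (j : Fin n) :
    pderiv j (Hess n u) x *ᵥ v = (dirDerivHess u x v).col j := by
  ext s
  simp only [Matrix.mulVec, dotProduct, Matrix.col_apply, dirDerivHess, Matrix.sum_apply]
  refine Finset.sum_congr rfl fun p _ => ?_
  rw [Matrix.smul_apply, smul_eq_mul, mul_comm, (isSymm_pderiv_Hess hu j x).apply p s,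
    pderiv_Hess_comm hu, (isSymm_pderiv_Hess hu p x).apply s j]

end HessianDerivatives

section LinearizedEquation

open scoped Matrix.Norms.Operator

variable {n : ℕ} {b : ℝ} {u : 𝔼 n → ℝ}

/-- Entire convex solutions of `Δu + b det D²u = 1`, convexity being expressed by `0 ≤ D²u`. -/
structure IsConvexSolution (b : ℝ) (u : 𝔼 n → ℝ) : Prop where
  contDiff : ContDiff ℝ ∞ u
  posSemidef : ∀ x, (Hess n u x).PosSemidef
  trace_add_det : ∀ x, (Hess n u x).trace + b * (Hess n u x).det = 1

/-- The coefficient matrix `1 + b adj (D²u)` of the linearization of `Δu + b det D²u`. -/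
noncomputable def linearizedCoeff (b : ℝ) (u : 𝔼 n → ℝ) (x : 𝔼 n) : Matrix (Fin n) (Fin n) ℝ :=
  1 + b • (Hess n u x).adjugate

theorem isSymm_linearizedCoeff (b : ℝ) (hu : ContDiff ℝ 2 u) (x : 𝔼 n) :
    (linearizedCoeff b u x).IsSymm := by
  rw [Matrix.IsSymm, linearizedCoeff, Matrix.transpose_add, Matrix.transpose_one,
    Matrix.transpose_smul, Matrix.adjugate_transpose, isSymm_Hess hu x]

theorem contDiff_linearizedCoeff (b : ℝ) (hu : ContDiff ℝ ∞ u) :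
    ContDiff ℝ ∞ (linearizedCoeff b u) :=
  contDiff_const.add ((contDiff_adjugate.comp (contDiff_Hess hu (by simp))).const_smul b)

theorem pderiv_linearizedCoeff (b : ℝ) (hu : ContDiff ℝ 3 u) (k : Fin n) (x : 𝔼 n) :
    pderiv k (linearizedCoeff b u) x =
      b • fderiv ℝ Matrix.adjugate (Hess n u x) (pderiv k (Hess n u) x) := by
  have hHess : DifferentiableAt ℝ (Hess n u) x :=
    (contDiff_Hess (m := 1) hu (by norm_num)).differentiable one_ne_zero x
  have hadj : DifferentiableAt ℝ (fun y => (Hess n u y).adjugate) x :=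
    (contDiff_adjugate.differentiable (by simp) _).comp x hHess
  rw [← pderiv_adjugate hHess, ← zero_add (b • _), ← pderiv_const 1 k]
  refine (pderiv_add (differentiableAt_const _) (hadj.const_smul b) k).trans (congrArg _ ?_)
  exact pderiv_linearMap_comp (b • LinearMap.id) hadj k

namespace IsConvexSolution

theorem trace_linearizedCoeff_mul_pderiv (hu : IsConvexSolution b u) (q : Fin n) (x : 𝔼 n) :
    (linearizedCoeff b u x * pderiv q (Hess n u) x).trace = 0 := by
  have hHess : DifferentiableAt ℝ (Hess n u) x :=
    (contDiff_Hess (m := ∞) hu.contDiff (by simp)).differentiable (by simp) x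
  have htrace : DifferentiableAt ℝ (fun y => (Hess n u y).trace) x :=
    (Matrix.traceLinearMap (Fin n) ℝ ℝ).toContinuousLinearMap.differentiableAt.comp x hHess
  have hdet : DifferentiableAt ℝ (fun y => (Hess n u y).det) x :=
    (contDiff_det.differentiable (by simp) _).comp x hHess
  calc (linearizedCoeff b u x * pderiv q (Hess n u) x).trace
      = pderiv q (fun y => (Hess n u y).trace + b * (Hess n u y).det) x := by
        rw [pderiv_add htrace (hdet.const_mul b), pderiv_const_mul hdet, pderiv_trace hHess,
          pderiv_det hHess, linearizedCoeff, Matrix.add_mul, Matrix.one_mul, Matrix.smul_mul,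
          Matrix.trace_add, Matrix.trace_smul, smul_eq_mul]
    _ = 0 := by rw [funext hu.trace_add_det, pderiv_const]

theorem trace_linearizedCoeff_mul_pderiv_pderiv (hu : IsConvexSolution b u) (p q : Fin n)
    (x : 𝔼 n) : (linearizedCoeff b u x * pderiv p (pderiv q (Hess n u)) x).trace =
      -(b * (fderiv ℝ Matrix.adjugate (Hess n u x) (pderiv p (Hess n u) x) *
        pderiv q (Hess n u) x).trace) := by
  have hcoeff : DifferentiableAt ℝ (linearizedCoeff b u) x :=
    (contDiff_linearizedCoeff b hu.contDiff).differentiable (by simp) x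
  have hpderiv : DifferentiableAt ℝ (pderiv q (Hess n u)) x :=
    (contDiff_pderiv (contDiff_Hess (m := ∞) hu.contDiff (by simp)) (m := ∞) (by simp)
      q).differentiable (by simp) x
  have hzero : pderiv p (fun y => (linearizedCoeff b u y * pderiv q (Hess n u) y).trace) x = 0 := by
    rw [funext (hu.trace_linearizedCoeff_mul_pderiv q), pderiv_const]
  rw [pderiv_trace_mul hcoeff hpderiv,
    pderiv_linearizedCoeff b (contDiff_infty.1 hu.contDiff 3), Matrix.smul_mul,
    Matrix.trace_smul, smul_eq_mul] at hzero
  linarith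

theorem sum_trace_linearizedCoeff_mul_pderiv_pderiv (hu : IsConvexSolution b u) (x : 𝔼 n)
    (v : Fin n → ℝ) :
    (linearizedCoeff b u x * ∑ p, ∑ q, (v p * v q) • pderiv p (pderiv q (Hess n u)) x).trace =
      -(b * (fderiv ℝ Matrix.adjugate (Hess n u x) (dirDerivHess u x v) *
        dirDerivHess u x v).trace) := by
  have hlin : fderiv ℝ Matrix.adjugate (Hess n u x) (dirDerivHess u x v) =
      ∑ p, v p • fderiv ℝ Matrix.adjugate (Hess n u x) (pderiv p (Hess n u) x) := by
    simp only [dirDerivHess, map_sum, map_smul]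
  rw [hlin]
  simp only [dirDerivHess, Matrix.sum_mul, Matrix.trace_sum, Matrix.smul_mul,
    Matrix.mul_smul, Matrix.trace_smul, smul_eq_mul, hu.trace_linearizedCoeff_mul_pderiv_pderiv,
    Finset.mul_sum, ← Finset.sum_neg_distrib]
  rw [Finset.sum_comm]
  exact Finset.sum_congr rfl fun p _ => Finset.sum_congr rfl fun q _ => by ring

end IsConvexSolution

end LinearizedEquation

section ResolventOfHessian

open scoped Matrix.Norms.Operator

theorem dotProduct_mul_mul_mulVec_of_isSymm {ι : Type*} [Fintype ι] {N : Matrix ι ι ℝ}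
    (hN : N.IsSymm) (S : Matrix ι ι ℝ) (e : ι → ℝ) :
    e ⬝ᵥ (N * S * N) *ᵥ e = (N *ᵥ e) ⬝ᵥ S *ᵥ (N *ᵥ e) := by
  rw [← Matrix.mulVec_mulVec, ← Matrix.mulVec_mulVec, Matrix.dotProduct_mulVec,
    ← Matrix.mulVec_transpose, hN]

variable {n : ℕ} {b δ : ℝ} {u : 𝔼 n → ℝ}

/-- The resolvent `(D²u + δ)⁻¹` of the Hessian. For `δ > 0` it is defined and smooth also where
`D²u` degenerates. -/
noncomputable def resolventHess (δ : ℝ) (u : 𝔼 n → ℝ) (x : 𝔼 n) : Matrix (Fin n) (Fin n) ℝ :=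
  (Hess n u x + δ • 1)⁻¹

theorem isSymm_resolventHess (δ : ℝ) (hu : ContDiff ℝ 2 u) (x : 𝔼 n) :
    (resolventHess δ u x).IsSymm := by
  rw [Matrix.IsSymm, resolventHess, Matrix.transpose_nonsing_inv, Matrix.transpose_add,
    Matrix.transpose_smul, Matrix.transpose_one, isSymm_Hess hu x]

theorem contDiff_resolventHess (hδ : 0 < δ) (hu : ContDiff ℝ ∞ u)
    (hpsd : ∀ x, (Hess n u x).PosSemidef) : ContDiff ℝ ∞ (resolventHess δ u) :=
  contDiff_iff_contDiffAt.2 fun x =>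
    (contDiffAt_matrix_inv (posDef_add_smul_one (hpsd x) hδ).det_pos.ne').comp x
      ((contDiff_Hess hu (by simp)).add contDiff_const).contDiffAt

theorem pderiv_resolventHess (hδ : 0 < δ) (hu : ContDiff ℝ 3 u)
    (hpsd : ∀ x, (Hess n u x).PosSemidef) (k : Fin n) (x : 𝔼 n) :
    pderiv k (resolventHess δ u) x =
      -(resolventHess δ u x * pderiv k (Hess n u) x * resolventHess δ u x) := by
  have hHess : DifferentiableAt ℝ (Hess n u) x :=
    (contDiff_Hess (m := 1) hu (by norm_num)).differentiable one_ne_zero x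
  have hadd : pderiv k (fun y => Hess n u y + δ • 1) x = pderiv k (Hess n u) x := by
    rw [← add_zero (pderiv k (Hess n u) x), ← pderiv_const (δ • 1) k]
    exact pderiv_add hHess (differentiableAt_const _) k
  rw [← hadd]
  exact pderiv_matrix_inv (hHess.add_const _) (posDef_add_smul_one (hpsd x) hδ).det_pos.ne' k

theorem pderiv_neg_mul_mul {ι : Type*} [Fintype ι] {F G : 𝔼 n → Matrix ι ι ℝ}
    {x : 𝔼 n} (hF : DifferentiableAt ℝ F x) (hG : DifferentiableAt ℝ G x) (k : Fin n) :
    pderiv k (fun y => -(F y * G y * F y)) x =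
      -((pderiv k F x * G x + F x * pderiv k G x) * F x + F x * G x * pderiv k F x) := by
  classical
  refine (pderiv_neg k).trans (congrArg Neg.neg ((pderiv_mul (hF.mul hG) hF k).trans ?_))
  exact congrArg (· * F x + F x * G x * pderiv k F x) (pderiv_mul hF hG k)

theorem pderiv_pderiv_resolventHess (hδ : 0 < δ) (hu : ContDiff ℝ ∞ u)
    (hpsd : ∀ x, (Hess n u x).PosSemidef) (i j : Fin n) (x : 𝔼 n) :
    letI N := resolventHess δ u x
    letI T := fun k => pderiv k (Hess n u) x
    pderiv i (pderiv j (resolventHess δ u)) x =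
      N * (T i * N * T j) * N + N * (T j * N * T i) * N -
        N * pderiv i (pderiv j (Hess n u)) x * N := by
  have hu₃ : ContDiff ℝ 3 u := contDiff_infty.1 hu 3
  have hN : DifferentiableAt ℝ (resolventHess δ u) x :=
    (contDiff_resolventHess hδ hu hpsd).differentiable (by simp) x
  have hT : DifferentiableAt ℝ (pderiv j (Hess n u)) x :=
    (contDiff_pderiv (contDiff_Hess (m := ∞) hu (by simp)) (m := ∞) (by simp)
      j).differentiable (by simp) x
  rw [funext (pderiv_resolventHess hδ hu₃ hpsd j), pderiv_neg_mul_mul hN hT,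
    pderiv_resolventHess hδ hu₃ hpsd i]
  noncomm_ring

/-- The quadratic form `eᵀ (D²u + δ)⁻¹ e` of the resolvent, as a function of the point. -/
noncomputable def resolventQuad (δ : ℝ) (u : 𝔼 n → ℝ) (e : Fin n → ℝ) (x : 𝔼 n) : ℝ :=
  e ⬝ᵥ resolventHess δ u x *ᵥ e

theorem contDiff_resolventQuad (hδ : 0 < δ) (hu : ContDiff ℝ ∞ u)
    (hpsd : ∀ x, (Hess n u x).PosSemidef) (e : Fin n → ℝ) :
    ContDiff ℝ ∞ (resolventQuad δ u e) := by
  have hentry := contDiff_matrix.1 (contDiff_resolventHess hδ hu hpsd)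
  rw [show resolventQuad δ u e = _ from
    funext fun x => dotProduct_mulVec_eq_sum (resolventHess δ u x) e e]
  exact ContDiff.sum fun i _ => ContDiff.sum fun j _ => by
    have := hentry i j
    fun_prop

theorem pderiv_pderiv_resolventQuad (hδ : 0 < δ) (hu : ContDiff ℝ ∞ u)
    (hpsd : ∀ x, (Hess n u x).PosSemidef) (e : Fin n → ℝ) (i j : Fin n) (x : 𝔼 n) :
    pderiv i (pderiv j (resolventQuad δ u e)) x =
      e ⬝ᵥ pderiv i (pderiv j (resolventHess δ u)) x *ᵥ e := by
  have hN := contDiff_resolventHess hδ hu hpsd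
  have hj : pderiv j (resolventQuad δ u e) =
      fun y => e ⬝ᵥ pderiv j (resolventHess δ u) y *ᵥ e :=
    funext fun y => pderiv_dotProduct_mulVec (hN.differentiable (by simp) y) e j
  rw [hj, pderiv_dotProduct_mulVec
    ((contDiff_pderiv hN (m := ∞) (by simp) j).differentiable (by simp) x)]

theorem dotProduct_pderiv_Hess_mul_mul_mulVec (hu : ContDiff ℝ 3 u) (N : Matrix (Fin n) (Fin n) ℝ)
    (x : 𝔼 n) (v : Fin n → ℝ) (i j : Fin n) :
    v ⬝ᵥ (pderiv i (Hess n u) x * N * pderiv j (Hess n u) x) *ᵥ v =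
      (dirDerivHess u x v * N * dirDerivHess u x v) i j := by
  rw [← Matrix.mulVec_mulVec, ← Matrix.mulVec_mulVec, Matrix.dotProduct_mulVec,
    ← Matrix.mulVec_transpose, isSymm_pderiv_Hess hu, pderiv_Hess_mulVec hu,
    pderiv_Hess_mulVec hu, Matrix.mul_assoc, Matrix.mul_apply']
  exact congrArg (· ⬝ᵥ _) (funext fun k => (isSymm_dirDerivHess hu x v).apply i k)

theorem dotProduct_pderiv_pderiv_Hess_mulVec (hu : ContDiff ℝ 4 u) (x : 𝔼 n) (v : Fin n → ℝ)
    (i j : Fin n) :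
    v ⬝ᵥ pderiv i (pderiv j (Hess n u)) x *ᵥ v =
      (∑ p, ∑ q, (v p * v q) • pderiv p (pderiv q (Hess n u)) x) i j := by
  simp only [dotProduct_mulVec_eq_sum, Matrix.sum_apply, Matrix.smul_apply, smul_eq_mul]
  refine Finset.sum_congr rfl fun p _ => Finset.sum_congr rfl fun q _ => ?_
  rw [pderiv_pderiv_Hess_comm hu]
  ring

theorem Hess_resolventQuad (hδ : 0 < δ) (hu : ContDiff ℝ ∞ u)
    (hpsd : ∀ x, (Hess n u x).PosSemidef) (e : Fin n → ℝ) (x : 𝔼 n) :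
    letI N := resolventHess δ u x
    letI v := N *ᵥ e
    Hess n (resolventQuad δ u e) x =
      (2 : ℝ) • (dirDerivHess u x v * N * dirDerivHess u x v) -
        ∑ p, ∑ q, (v p * v q) • pderiv p (pderiv q (Hess n u)) x := by
  have hu₃ : ContDiff ℝ 3 u := contDiff_infty.1 hu 3
  have hN := isSymm_resolventHess δ (contDiff_infty.1 hu 2) x
  have hHNH : ∀ v, (dirDerivHess u x v * resolventHess δ u x * dirDerivHess u x v).IsSymm :=
    fun v => by
      rw [Matrix.IsSymm, Matrix.transpose_mul, Matrix.transpose_mul, hN,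
        isSymm_dirDerivHess hu₃, Matrix.mul_assoc]
  ext i j
  rw [Hess_apply (contDiff_infty.1 (contDiff_resolventQuad hδ hu hpsd e) 2),
    pderiv_pderiv_resolventQuad hδ hu hpsd, pderiv_pderiv_resolventHess hδ hu hpsd,
    Matrix.sub_mulVec, Matrix.add_mulVec, dotProduct_sub, dotProduct_add,
    dotProduct_mul_mul_mulVec_of_isSymm hN, dotProduct_mul_mul_mulVec_of_isSymm hN,
    dotProduct_mul_mul_mulVec_of_isSymm hN, dotProduct_pderiv_Hess_mul_mul_mulVec hu₃,
    dotProduct_pderiv_Hess_mul_mul_mulVec hu₃, (hHNH _).apply i j,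
    dotProduct_pderiv_pderiv_Hess_mulVec (contDiff_infty.1 hu 4), Matrix.sub_apply,
    Matrix.smul_apply, smul_eq_mul, two_mul]

namespace IsConvexSolution

theorem trace_Hess_le_one (hb : 0 ≤ b) (hu : IsConvexSolution b u) (x : 𝔼 n) :
    (Hess n u x).trace ≤ 1 := by
  linarith [hu.trace_add_det x, mul_nonneg hb (hu.posSemidef x).det_nonneg]

theorem ellipticOp_resolventQuad (hδ : 0 < δ) (hu : IsConvexSolution b u) (e : Fin n → ℝ)
    (x : 𝔼 n) :
    ellipticOp (linearizedCoeff b u) (resolventQuad δ u e) x =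
      resolventForm b δ (Hess n u x) (dirDerivHess u x (resolventHess δ u x *ᵥ e)) := by
  have hw := contDiff_infty.1 (contDiff_resolventQuad hδ hu.contDiff hu.posSemidef e) 2
  rw [ellipticOp_eq_trace_mul_Hess hw, Hess_resolventQuad hδ hu.contDiff hu.posSemidef,
    Matrix.mul_sub, Matrix.trace_sub, hu.sum_trace_linearizedCoeff_mul_pderiv_pderiv,
    Matrix.mul_smul, Matrix.trace_smul, smul_eq_mul, sub_neg_eq_add, add_comm, resolventForm,
    ← resolventHess, ← linearizedCoeff, Matrix.mul_assoc, Matrix.mul_assoc, Matrix.mul_assoc]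

theorem isDivFreeElliptic (hb : 0 ≤ b) (hu : IsConvexSolution b u) :
    IsDivFreeElliptic (1 + b) (linearizedCoeff b u) := by
  have hu₃ : ContDiff ℝ 3 u := contDiff_infty.1 hu.contDiff 3
  have hu₂ : ContDiff ℝ 2 u := contDiff_infty.1 hu.contDiff 2
  have hquad : ∀ x p, p ⬝ᵥ linearizedCoeff b u x *ᵥ p =
      p ⬝ᵥ p + b * (p ⬝ᵥ (Hess n u x).adjugate *ᵥ p) := fun x p => by
    rw [linearizedCoeff, Matrix.add_mulVec, dotProduct_add, Matrix.one_mulVec, Matrix.smul_mulVec,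
      dotProduct_smul, smul_eq_mul]
  have hcoeff := contDiff_linearizedCoeff b hu.contDiff
  refine ⟨fun i j => contDiff_infty.1 (contDiff_matrix.1 hcoeff i j) 1,
    isSymm_linearizedCoeff b hu₂, fun x j => ?_, fun x p => ?_, fun x p => ?_⟩
  · simp_rw [← pderiv_matrix_apply (hcoeff.differentiable (by simp) x),
      pderiv_linearizedCoeff b hu₃, Matrix.smul_apply, ← Finset.smul_sum]
    rw [sum_fderiv_adjugate_apply_eq_zero _ (isSymm_pderiv_Hess hu₃ · x)
      (fun i p q => pderiv_Hess_comm hu₃ i p q x), smul_zero]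
  · rw [hquad]
    have := (posSemidef_adjugate (hu.posSemidef x)).dotProduct_mulVec_nonneg p
    exact le_add_of_nonneg_right (mul_nonneg hb this)
  · have := (posSemidef_one_sub_adjugate (hu.posSemidef x)
      (hu.trace_Hess_le_one hb x)).dotProduct_mulVec_nonneg p
    rw [star_trivial, Matrix.sub_mulVec, dotProduct_sub, Matrix.one_mulVec, sub_nonneg] at this
    rw [hquad, add_mul, one_mul]
    exact add_le_add_right (mul_le_mul_of_nonneg_left this hb) _

end IsConvexSolution

theorem exists_ellipticOp_resolventQuad_nonneg (n : ℕ) (hb : 0 ≤ b) :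
    ∃ δ, 0 < δ ∧ ∀ u : 𝔼 n → ℝ, IsConvexSolution b u → ∀ e x,
      0 ≤ ellipticOp (linearizedCoeff b u) (resolventQuad δ u e) x := by
  obtain ⟨δ, hδ, hform⟩ := exists_resolventForm_nonneg (ι := Fin n) hb
  refine ⟨δ, hδ, fun u hu e x => ?_⟩
  rw [hu.ellipticOp_resolventQuad hδ]
  exact hform _ _ (hu.posSemidef x) (hu.trace_Hess_le_one hb x)
    (isSymm_dirDerivHess (contDiff_infty.1 hu.contDiff 3) x _)

end ResolventOfHessian

section ConvexFunctions

theorem deriv_deriv_nonneg_of_convexOn {g : ℝ → ℝ} (hg : ConvexOn ℝ univ g)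
    (hg' : Differentiable ℝ g) (t : ℝ) : 0 ≤ deriv (deriv g) t :=
  (monotoneOn_univ.1 (hg.monotoneOn_deriv fun t _ => hg' t)).deriv_nonneg

theorem fderiv_fderiv_apply_nonneg_of_convexOn {E : Type*} [NormedAddCommGroup E]
    [NormedSpace ℝ E] {f : E → ℝ} (hf : ConvexOn ℝ univ f) (hf' : ContDiff ℝ 2 f) (x v : E) :
    0 ≤ fderiv ℝ (fderiv ℝ f) x v v := by
  have hline : ∀ t : ℝ, HasDerivAt (fun t : ℝ => x + t • v) v t := fun t => by
    simpa using ((hasDerivAt_id' t).smul_const v).const_add x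
  have hderiv : ∀ t : ℝ, HasDerivAt (fun t : ℝ => f (x + t • v)) (fderiv ℝ f (x + t • v) v) t :=
    fun t => (hf'.differentiable two_ne_zero _).hasFDerivAt.comp_hasDerivAt t (hline t)
  have hconv : ConvexOn ℝ univ fun t : ℝ => f (x + t • v) := by
    refine (hf.comp_affineMap (AffineMap.lineMap x (x + v))).congr fun t _ => ?_
    simp [AffineMap.lineMap_apply, add_comm]
  have hderiv₂ : HasDerivAt (fun t : ℝ => fderiv ℝ f (x + t • v) v)
      (fderiv ℝ (fderiv ℝ f) x v v) 0 := by
    have hfderiv := ((hf'.fderiv_right (m := 1) le_rfl).differentiable one_ne_zero x).hasFDerivAt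
    have hcomp : HasDerivAt (fun t : ℝ => fderiv ℝ f (x + t • v)) (fderiv ℝ (fderiv ℝ f) x v) 0 :=
      hfderiv.comp_hasDerivAt_of_eq 0 (hline 0) (by simp)
    simpa using hcomp.clm_apply (hasDerivAt_const (0 : ℝ) v)
  have hfun : deriv (fun t : ℝ => f (x + t • v)) = fun t => fderiv ℝ f (x + t • v) v :=
    funext fun t => (hderiv t).deriv
  rw [← hderiv₂.deriv, ← hfun]
  exact deriv_deriv_nonneg_of_convexOn hconv (fun t => (hderiv t).differentiableAt) 0

theorem posSemidef_Hess_of_convexOn {n : ℕ} {u : 𝔼 n → ℝ} (hconv : ConvexOn ℝ univ u)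
    (hu : ContDiff ℝ 2 u) (x : 𝔼 n) : (Hess n u x).PosSemidef := by
  refine .of_dotProduct_mulVec_nonneg (isSymm_Hess hu x) fun p => ?_
  have hp : WithLp.toLp 2 p = ∑ i, p i • EuclideanSpace.single i (1 : ℝ) := by
    ext j
    simp [Pi.single_apply]
  refine (fderiv_fderiv_apply_nonneg_of_convexOn hconv hu x (WithLp.toLp 2 p)).trans_eq ?_
  rw [hp, star_trivial, dotProduct_mulVec_eq_sum]
  simp only [map_sum, sum_apply, map_smul, smul_apply, smul_eq_mul, Hess, Matrix.of_apply,
    iteratedFDeriv_two_apply, Finset.mul_sum]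
  rw [Finset.sum_comm]
  exact Finset.sum_congr rfl fun i _ => Finset.sum_congr rfl fun j _ => by
    simp only [Matrix.cons_val_zero, Matrix.cons_val_one]
    ring

end ConvexFunctions

section SimultaneousInfima

theorem exists_measureReal_div_card_le_inter {α ι : Type*} [MeasurableSpace α] {μ : Measure α}
    {s : Finset ι} (hs : s.Nonempty) {A : ι → Set α} {B : Set α} (hB : μ B ≠ ⊤)
    (hcover : B ⊆ ⋃ i ∈ s, A i) : ∃ i ∈ s, μ.real B / s.card ≤ μ.real (A i ∩ B) := by
  refine Finset.exists_le_of_sum_le hs ?_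
  rw [Finset.sum_const, nsmul_eq_mul,
    mul_div_cancel₀ _ (Nat.cast_ne_zero.2 hs.card_pos.ne')]
  calc μ.real B ≤ μ.real (⋃ i ∈ s, A i ∩ B) := by
        refine measureReal_mono (fun x hx => ?_) ?_
        · obtain ⟨i, hi, hxi⟩ := mem_iUnion₂.1 (hcover hx)
          exact mem_biUnion hi ⟨hxi, hx⟩
        · exact measure_ne_top_of_subset (iUnion₂_subset fun i _ => inter_subset_right) hB
    _ ≤ ∑ i ∈ s, μ.real (A i ∩ B) := measureReal_biUnion_finset_le s _

section Scaling

variable {E : Type*} [NormedAddCommGroup E] [NormedSpace ℝ E]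

theorem preimage_add_smul_closedBall (x₀ : E) {R : ℝ} (hR : 0 < R) :
    (fun x => x₀ + R • x) ⁻¹' closedBall x₀ R = closedBall 0 1 := by
  ext x
  rw [mem_preimage, mem_closedBall, dist_eq_norm, add_sub_cancel_left, norm_smul,
    Real.norm_of_nonneg hR.le, mul_le_iff_le_one_right hR, mem_closedBall_zero_iff]

theorem measureReal_preimage_add_smul [FiniteDimensional ℝ E] [MeasurableSpace E] [BorelSpace E]
    (μ : Measure E) [μ.IsAddHaarMeasure] (x₀ : E) {R : ℝ} (hR : 0 < R) (s : Set E) :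
    μ.real ((fun x => x₀ + R • x) ⁻¹' s) = μ.real s / R ^ Module.finrank ℝ E := by
  have hcomp : (fun x => x₀ + R • x) ⁻¹' s = (R • ·) ⁻¹' ((x₀ + ·) ⁻¹' s) := rfl
  rw [hcomp, measureReal_def, Measure.addHaar_preimage_smul μ hR.ne', measure_preimage_add,
    ENNReal.toReal_mul, ENNReal.toReal_ofReal (abs_nonneg _), abs_of_pos (by positivity),
    ← measureReal_def, inv_mul_eq_div]

end Scaling

variable {n : ℕ} {Λ : ℝ} {a : 𝔼 n → Matrix (Fin n) (Fin n) ℝ}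

theorem IsDivFreeElliptic.comp_add_smul (ha : IsDivFreeElliptic Λ a) (x₀ : 𝔼 n) (R : ℝ) :
    IsDivFreeElliptic Λ fun x => a (x₀ + R • x) where
  contDiff i j := by
    have := ha.contDiff i j
    fun_prop
  isSymm _ := ha.isSymm _
  divFree x j := by
    simp_rw [fun i => pderiv_comp_add_smul
      ((ha.contDiff i j).differentiable one_ne_zero (x₀ + R • x)) i, ← Finset.mul_sum,
      ha.divFree, mul_zero]
  le_dotProduct_mulVec _ := ha.le_dotProduct_mulVec _
  dotProduct_mulVec_le _ := ha.dotProduct_mulVec_le _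

theorem ellipticOp_comp_add_smul {f : 𝔼 n → ℝ} (hf : ContDiff ℝ 2 f) (x₀ : 𝔼 n) (R : ℝ)
    (x : 𝔼 n) : ellipticOp (fun y => a (x₀ + R • y)) (fun y => f (x₀ + R • y)) x =
      R ^ 2 * ellipticOp a f (x₀ + R • x) := by
  have hfirst : ∀ j, pderiv j (fun y => f (x₀ + R • y)) = fun y => R * pderiv j f (x₀ + R • y) :=
    fun j => funext fun y => pderiv_comp_add_smul (hf.differentiable two_ne_zero _) j
  have hderiv : ∀ j, ContDiff ℝ 1 (pderiv j f) := contDiff_pderiv hf one_add_one_eq_two.le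
  have hsecond : ∀ i j, pderiv i (pderiv j fun y => f (x₀ + R • y)) x =
      R ^ 2 * pderiv i (pderiv j f) (x₀ + R • x) := fun i j => by
    have hcomp : ContDiff ℝ 1 fun y => pderiv j f (x₀ + R • y) := by
      have := hderiv j
      fun_prop
    rw [hfirst, pderiv_const_mul (hcomp.differentiable one_ne_zero x),
      pderiv_comp_add_smul ((hderiv j).differentiable one_ne_zero _), sq, mul_assoc]
  simp only [ellipticOp, hsecond, Finset.mul_sum, mul_left_comm]

theorem exists_mul_le_of_nonneg_supersolution (hn : 2 ≤ n) (hΛ : 0 ≤ Λ) {θ : ℝ} (hθ : 0 < θ) :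
    ∃ c, 0 < c ∧ ∀ a, IsDivFreeElliptic (n := n) Λ a → ∀ v : 𝔼 n → ℝ, ContDiff ℝ 2 v →
      (∀ x, 0 ≤ v x) → (∀ x, ellipticOp a v x ≤ 0) → ∀ x₀ R ε, 0 < R → 0 < ε →
      θ * R ^ n ≤ volume.real ({x | ε ≤ v x} ∩ closedBall x₀ R) → c * ε ≤ v x₀ := by
  obtain ⟨c, hc, hharnack⟩ := exists_le_of_nonneg_supersolution hn hΛ hθ
  refine ⟨c, hc, fun a ha v hv hv0 hLv x₀ R ε hR hε hvol => ?_⟩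
  have hvR : ContDiff ℝ 2 fun x => v (x₀ + R • x) := by fun_prop
  have hLvR : ∀ x, ellipticOp (fun y => a (x₀ + R • y)) (fun y => ε⁻¹ * v (x₀ + R • y)) x ≤ 0 :=
    fun x => by
      rw [ellipticOp_comp (g := fun t => ε⁻¹ * t) (g' := fun _ => ε⁻¹) hvR
        (fun y => by simpa using (hasDerivAt_id' (v (x₀ + R • y))).const_mul ε⁻¹)
        (hasDerivAt_const _ _), zero_mul, add_zero, ellipticOp_comp_add_smul hv]
      exact mul_nonpos_of_nonneg_of_nonpos (by positivity)
        (mul_nonpos_of_nonneg_of_nonpos (sq_nonneg R) (hLv _))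
  have hset : {x | 1 ≤ ε⁻¹ * v (x₀ + R • x)} ∩ closedBall 0 1 =
      (fun x => x₀ + R • x) ⁻¹' ({x | ε ≤ v x} ∩ closedBall x₀ R) := by
    rw [preimage_inter, preimage_add_smul_closedBall x₀ hR]
    refine congrArg (· ∩ _) (ext fun x => ?_)
    rw [mem_ofPred_eq, mem_preimage, mem_ofPred_eq, le_inv_mul_iff₀ hε, mul_one]
  have hmain := hharnack _ (ha.comp_add_smul x₀ R) _ (contDiff_const.mul hvR)
    (fun x => mul_nonneg (inv_nonneg.2 hε.le) (hv0 _)) hLvR <| by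
      rwa [hset, measureReal_preimage_add_smul volume x₀ hR, finrank_euclideanSpace_fin,
        le_div_iff₀ (pow_pos hR n)]
  rwa [smul_zero, add_zero, le_inv_mul_iff₀ hε, mul_comm] at hmain

theorem exists_forall_lt_of_nonneg_supersolution (hn : 2 ≤ n) (hΛ : 0 ≤ Λ)
    (ha : IsDivFreeElliptic Λ a) {ι : Type*} (s : Finset ι) {v : ι → 𝔼 n → ℝ}
    (hv : ∀ i, ContDiff ℝ 2 (v i)) (hv0 : ∀ i x, 0 ≤ v i x)
    (hLv : ∀ i x, ellipticOp a (v i) x ≤ 0) (hinf : ∀ i ε, 0 < ε → ∃ x, v i x < ε) {ε : ℝ}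
    (hε : 0 < ε) : ∃ x, ∀ i ∈ s, v i x < ε := by
  by_contra! hcon
  have hs : s.Nonempty := (hcon 0).imp fun _ h => h.1
  have : (0 : ℝ) < s.card := Nat.cast_pos.2 hs.card_pos
  set V := volume.real (closedBall (0 : 𝔼 n) 1) with hV
  have hVpos : 0 < V := ENNReal.toReal_pos (measure_closedBall_pos volume _ one_pos).ne'
    measure_closedBall_lt_top.ne
  obtain ⟨c, hc, hharnack⟩ := exists_mul_le_of_nonneg_supersolution hn hΛ
    (θ := V / (s.card * 2 ^ n)) (by positivity)
  choose x hx using fun i => hinf i (c * ε) (mul_pos hc hε)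
  obtain ⟨R, hR, hxR⟩ : ∃ R, 0 < R ∧ ∀ i ∈ s, ‖x i‖ ≤ R :=
    ⟨1 + ∑ i ∈ s, ‖x i‖, by positivity, fun i hi =>
      (Finset.single_le_sum (fun j _ => norm_nonneg (x j)) hi).trans (by linarith)⟩
  obtain ⟨i, hi, hvol⟩ := exists_measureReal_div_card_le_inter (μ := volume)
    (A := fun i => {y | ε ≤ v i y}) (B := closedBall (0 : 𝔼 n) R) hs
    measure_closedBall_lt_top.ne fun y _ => by
      obtain ⟨i, hi, hiy⟩ := hcon y
      exact mem_biUnion hi hiy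
  have hball : closedBall (0 : 𝔼 n) R ⊆ closedBall (x i) (2 * R) :=
    closedBall_subset_closedBall' (by linarith [hxR i hi, dist_zero_left (x i)])
  refine (hx i).not_ge (hharnack a ha (v i) (hv i) (hv0 i) (hLv i) (x i) (2 * R) ε
    (by positivity) hε ?_)
  calc V / (s.card * 2 ^ n) * (2 * R) ^ n = volume.real (closedBall (0 : 𝔼 n) R) / s.card := by
        rw [Measure.addHaar_real_closedBall' volume _ hR.le, finrank_euclideanSpace_fin, ← hV,
          mul_pow]
        field_simp
    _ ≤ volume.real ({y | ε ≤ v i y} ∩ closedBall 0 R) := hvol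
    _ ≤ volume.real ({y | ε ≤ v i y} ∩ closedBall (x i) (2 * R)) :=
        measureReal_mono (inter_subset_inter_right _ hball)
          (measure_ne_top_of_subset inter_subset_right measure_closedBall_lt_top.ne)

theorem exists_forall_lt_add_of_bddAbove_subsolution (hn : 2 ≤ n) (hΛ : 0 ≤ Λ)
    (ha : IsDivFreeElliptic Λ a) {ι : Type*} (s : Finset ι) {w : ι → 𝔼 n → ℝ}
    (hw : ∀ i, ContDiff ℝ 2 (w i)) (hbdd : ∀ i, BddAbove (range (w i)))
    (hLw : ∀ i x, 0 ≤ ellipticOp a (w i) x) {ε : ℝ} (hε : 0 < ε) :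
    ∃ x, ∀ i ∈ s, ∀ y, w i y < w i x + ε := by
  have hle : ∀ i y, w i y ≤ ⨆ x, w i x := fun i y => le_ciSup (hbdd i) y
  have hLv : ∀ i x, ellipticOp a (fun y => (⨆ x, w i x) - w i y) x ≤ 0 := fun i x => by
    rw [ellipticOp_comp (g := fun t => (⨆ x, w i x) - t) (g' := fun _ => -1) (hw i)
      (fun y => (hasDerivAt_id' (w i y)).const_sub _) (hasDerivAt_const _ _), zero_mul, add_zero,
      neg_one_mul]
    exact neg_nonpos.2 (hLw i x)
  obtain ⟨x, hx⟩ := exists_forall_lt_of_nonneg_supersolution hn hΛ ha s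
    (fun i => contDiff_const.sub (hw i)) (fun i y => sub_nonneg.2 (hle i y)) hLv
    (fun i η hη => (exists_lt_of_lt_ciSup (sub_lt_self (⨆ x, w i x) hη)).imp
      fun _ h => sub_lt_comm.1 h) hε
  exact ⟨x, fun i hi y => by linarith [hx i hi, hle i y]⟩

end SimultaneousInfima

section Rigidity

theorem exists_forall_le_of_isCompact {α ι X : Type*} [TopologicalSpace α] {K : Set α}
    (hK : IsCompact K) (hK' : IsClosed K) {F : ι → α → ℝ} (hF : ∀ i, ContinuousOn (F i) K)
    {D : X → α} (hD : ∀ x, D x ∈ K)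
    (hfin : ∀ (s : Finset ι) (ε : ℝ), 0 < ε → ∃ x, ∀ i ∈ s, ∀ y, F i (D y) < F i (D x) + ε) :
    ∃ m ∈ K, ∀ i y, F i (D y) ≤ F i m := by
  classical
  let t : ι × ℕ → Set α := fun p =>
    K ∩ F p.1 ⁻¹' ⋂ y, Ici (F p.1 (D y) - 1 / (p.2 + 1))
  have hclosed : ∀ p, IsClosed (t p) := fun p =>
    (hF p.1).preimage_isClosed_of_isClosed hK' (isClosed_iInter fun _ => isClosed_Ici)
  have hne : ∀ s : Finset (ι × ℕ), (K ∩ ⋂ p ∈ s, t p).Nonempty := fun s => by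
    obtain ⟨x, hx⟩ := hfin (s.image Prod.fst) (1 / (s.sup Prod.snd + 1 : ℕ)) (by positivity)
    refine ⟨D x, hD x, mem_iInter₂.2 fun p hp => ⟨hD x, mem_iInter.2 fun y => ?_⟩⟩
    have hk : 1 / ((s.sup Prod.snd + 1 : ℕ) : ℝ) ≤ 1 / (p.2 + 1) :=
      one_div_le_one_div_of_le (by positivity) <| by
        exact_mod_cast Nat.add_le_add_right (Finset.le_sup (f := Prod.snd) hp) 1
    exact sub_le_iff_le_add.2
      ((hx p.1 (Finset.mem_image_of_mem _ hp) y).le.trans (by gcongr))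
  obtain ⟨m, hmK, hm⟩ := hK.inter_iInter_nonempty t hclosed hne
  refine ⟨m, hmK, fun i y => le_of_forall_pos_le_add fun ε hε => ?_⟩
  obtain ⟨k, hk⟩ := exists_nat_one_div_lt hε
  have hmk : F i (D y) - 1 / (k + 1) ≤ F i m :=
    mem_iInter.1 (mem_iInter.1 hm (i, k)).2 y
  linarith

section Matrix

variable {ι : Type*}

theorem isClosed_setOf_posSemidef [Finite ι] : IsClosed {A : Matrix ι ι ℝ | A.PosSemidef} := by
  have := Fintype.ofFinite ι
  simp_rw [Matrix.posSemidef_iff_dotProduct_mulVec, ofPred_and, ofPred_forall]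
  exact (isClosed_eq continuous_id.matrix_conjTranspose continuous_id).inter <|
    isClosed_iInter fun x => isClosed_le continuous_const <|
      continuous_const.dotProduct (continuous_id.matrix_mulVec continuous_const)

variable [Fintype ι]

theorem abs_apply_le_trace {A : Matrix ι ι ℝ} (hA : A.PosSemidef) (i j : ι) :
    |A i j| ≤ A.trace := by
  classical
  have hsymm : A j i = A i j := hA.isHermitian.apply i j
  have hdiag : ∀ k, A k k ≤ A.trace := fun k =>
    Finset.single_le_sum (f := fun k => A k k) (fun l _ => hA.diag_nonneg) (Finset.mem_univ k)
  have hadd := hA.dotProduct_mulVec_nonneg (Pi.single i 1 + Pi.single j 1)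
  have hsub := hA.dotProduct_mulVec_nonneg (Pi.single i 1 - Pi.single j 1)
  simp only [star_trivial, Matrix.mulVec_add, Matrix.mulVec_sub, Matrix.mulVec_single_one,
    add_dotProduct, sub_dotProduct, dotProduct_add, dotProduct_sub, single_one_dotProduct,
    Matrix.col_apply] at hadd hsub
  exact abs_le.2 ⟨by linarith [hdiag i, hdiag j], by linarith [hdiag i, hdiag j]⟩

theorem trace_mul_nonneg {A B : Matrix ι ι ℝ} (hA : A.PosSemidef) (hB : B.PosSemidef) :
    0 ≤ (A * B).trace := by
  obtain ⟨m, v, rfl⟩ := Matrix.posSemidef_iff_eq_sum_vecMulVec.1 hB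
  rw [Matrix.mul_sum, Matrix.trace_sum]
  refine Finset.sum_nonneg fun k _ => ?_
  rw [Matrix.mul_vecMulVec, Matrix.trace_vecMulVec, dotProduct_comm]
  exact hA.dotProduct_mulVec_nonneg (v k)

variable [DecidableEq ι]

theorem continuousAt_dotProduct_resolvent_mulVec {δ : ℝ} (hδ : 0 < δ) {A : Matrix ι ι ℝ}
    (hA : A.PosSemidef) (e : ι → ℝ) :
    ContinuousAt (fun A : Matrix ι ι ℝ => e ⬝ᵥ (A + δ • 1)⁻¹ *ᵥ e) A := by
  have hinv : ContinuousAt Inv.inv (A + δ • (1 : Matrix ι ι ℝ)) := by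
    refine continuousAt_matrix_inv _ ?_
    rw [Ring.inverse_eq_inv']
    exact continuousAt_inv₀ (posDef_add_smul_one hA hδ).det_pos.ne'
  have hshift : ContinuousAt (fun A : Matrix ι ι ℝ => A + δ • (1 : Matrix ι ι ℝ)) A :=
    (continuous_id.add continuous_const).continuousAt
  have hquad : Continuous fun B : Matrix ι ι ℝ => e ⬝ᵥ B *ᵥ e :=
    continuous_const.dotProduct (continuous_id.matrix_mulVec continuous_const)
  exact hquad.continuousAt.comp (ContinuousAt.comp (f := fun A => A + δ • 1) hinv hshift)

theorem posSemidef_inv_sub_inv_iff {P Q : Matrix ι ι ℝ} (hP : P.PosDef) (hQ : Q.PosDef) :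
    (Q⁻¹ - P⁻¹).PosSemidef ↔ (P - Q).PosSemidef := by
  have := hP.isUnit.invertible
  have := hQ.inv.isUnit.invertible
  have hP' := Matrix.PosDef.fromBlocks₁₁ (1 : Matrix ι ι ℝ) Q⁻¹ hP
  have hQ' := Matrix.PosDef.fromBlocks₂₂ P (1 : Matrix ι ι ℝ) hQ.inv
  rw [Matrix.conjTranspose_one, one_mul, mul_one] at hP' hQ'
  rw [← hP', hQ', Matrix.nonsing_inv_nonsing_inv Q hQ.det_pos.ne'.isUnit]

section Determinant

open scoped Matrix.Norms.Operator

theorem det_le_det_of_posSemidef_sub {P Q : Matrix ι ι ℝ} (hQ : Q.PosSemidef)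
    (hPQ : (P - Q).PosSemidef) : Q.det ≤ P.det := by
  have hderiv : ∀ t : ℝ, HasDerivAt (fun t : ℝ => (Q + t • (P - Q)).det)
      ((Q + t • (P - Q)).adjugate * (P - Q)).trace t := fun t => by
    have hline : HasDerivAt (fun t : ℝ => Q + t • (P - Q)) (P - Q) t :=
      (((hasDerivAt_id' t).smul_const (P - Q)).const_add Q).congr_deriv (one_smul ..)
    rw [← fderiv_det]
    exact (contDiff_det.differentiable (by simp) _).hasFDerivAt.comp_hasDerivAt t hline
  have hmono : MonotoneOn (fun t : ℝ => (Q + t • (P - Q)).det) (Icc 0 1) := by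
    refine monotoneOn_of_deriv_nonneg (convex_Icc 0 1)
      (fun t _ => (hderiv t).continuousAt.continuousWithinAt)
      (fun t _ => (hderiv t).differentiableAt.differentiableWithinAt) fun t ht => ?_
    rw [interior_Icc] at ht
    rw [(hderiv t).deriv]
    exact trace_mul_nonneg (posSemidef_adjugate (hQ.add (hPQ.smul ht.1.le))) hPQ
  simpa using hmono (left_mem_Icc.2 zero_le_one) (right_mem_Icc.2 zero_le_one) zero_le_one

end Determinant

/-- The values that the Hessian of an entire convex solution of `Δu + b det D²u = 1` may take. -/
def solutionMatrices (ι : Type*) [Fintype ι] [DecidableEq ι] (b : ℝ) : Set (Matrix ι ι ℝ) :=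
  {A | A.PosSemidef ∧ A.trace + b * A.det = 1}

theorem isCompact_solutionMatrices {b : ℝ} (hb : 0 ≤ b) : IsCompact (solutionMatrices ι b) := by
  have hclosed : IsClosed (solutionMatrices ι b) := isClosed_setOf_posSemidef.inter <|
    isClosed_eq (continuous_id.matrix_trace.add (continuous_id.matrix_det.const_mul b))
      continuous_const
  refine (isCompact_Icc (a := (-1 : ℝ)) (b := 1)).matrix.of_isClosed_subset hclosed ?_
  intro A hA i j
  have htrace : A.trace ≤ 1 := by linarith [hA.2, mul_nonneg hb hA.1.det_nonneg]
  exact abs_le.1 ((abs_apply_le_trace hA.1 i j).trans htrace)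

theorem eq_of_resolvent_le {b δ : ℝ} (hb : 0 ≤ b) (hδ : 0 < δ) {P Q : Matrix ι ι ℝ}
    (hP : P ∈ solutionMatrices ι b) (hQ : Q ∈ solutionMatrices ι b)
    (hle : ∀ e, e ⬝ᵥ (P + δ • 1)⁻¹ *ᵥ e ≤ e ⬝ᵥ (Q + δ • 1)⁻¹ *ᵥ e) : P = Q := by
  have hPδ := posDef_add_smul_one hP.1 hδ
  have hQδ := posDef_add_smul_one hQ.1 hδ
  have hinv : ((Q + δ • 1)⁻¹ - (P + δ • 1)⁻¹).PosSemidef :=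
    .of_dotProduct_mulVec_nonneg (hQδ.inv.isHermitian.sub hPδ.inv.isHermitian) fun e => by
      rw [star_trivial, Matrix.sub_mulVec, dotProduct_sub]
      exact sub_nonneg.2 (hle e)
  have hsub : (P - Q).PosSemidef := by
    simpa using (posSemidef_inv_sub_inv_iff hPδ hQδ).1 hinv
  have hdet := mul_le_mul_of_nonneg_left (det_le_det_of_posSemidef_sub hQ.1 hsub) hb
  have htrace : (P - Q).trace = 0 := by
    refine le_antisymm ?_ hsub.trace_nonneg
    rw [Matrix.trace_sub]
    linarith [hP.2, hQ.2]
  exact sub_eq_zero.1 (hsub.trace_eq_zero_iff.1 htrace)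

theorem eq_of_mem_solutionMatrices_of_subsingleton [Subsingleton ι] {b : ℝ} (hb : 0 ≤ b)
    {P Q : Matrix ι ι ℝ} (hP : P ∈ solutionMatrices ι b) (hQ : Q ∈ solutionMatrices ι b) :
    P = Q := by
  ext i j
  obtain rfl := Subsingleton.elim i j
  have hentry : ∀ A ∈ solutionMatrices ι b, (1 + b) * A i i = 1 := fun A hA => by
    have := hA.2
    rw [Matrix.det_eq_elem_of_subsingleton A i, Matrix.trace, Fintype.sum_subsingleton _ i,
      Matrix.diag_apply] at this
    linarith
  exact mul_left_cancel₀ (by positivity) ((hentry P hP).trans (hentry Q hQ).symm)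

end Matrix

namespace IsConvexSolution

variable {n : ℕ} {b : ℝ} {u : 𝔼 n → ℝ}

theorem Hess_mem_solutionMatrices (hu : IsConvexSolution b u) (x : 𝔼 n) :
    Hess n u x ∈ solutionMatrices (Fin n) b :=
  ⟨hu.posSemidef x, hu.trace_add_det x⟩

theorem exists_forall_resolventQuad_le (hn : 2 ≤ n) (hb : 0 ≤ b) {δ : ℝ} (hδ : 0 < δ)
    (hu : IsConvexSolution b u)
    (hL : ∀ e x, 0 ≤ ellipticOp (linearizedCoeff b u) (resolventQuad δ u e) x) :
    ∃ A ∈ solutionMatrices (Fin n) b,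
      ∀ e x, resolventQuad δ u e x ≤ e ⬝ᵥ (A + δ • 1)⁻¹ *ᵥ e := by
  have hcont : ∀ e, ContinuousOn (fun A => e ⬝ᵥ (A + δ • 1)⁻¹ *ᵥ e)
      (solutionMatrices (Fin n) b) := fun e A hA =>
    (continuousAt_dotProduct_resolvent_mulVec hδ hA.1 e).continuousWithinAt
  have hK := isCompact_solutionMatrices (ι := Fin n) hb
  have hbdd : ∀ e, BddAbove (range (resolventQuad δ u e)) := fun e => by
    refine (hK.bddAbove_image (hcont e)).mono (range_subset_iff.2 fun x => ?_)
    exact ⟨Hess n u x, hu.Hess_mem_solutionMatrices x, rfl⟩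
  exact exists_forall_le_of_isCompact hK hK.isClosed hcont hu.Hess_mem_solutionMatrices
    fun s ε hε => exists_forall_lt_add_of_bddAbove_subsolution hn (by positivity)
      (hu.isDivFreeElliptic hb) s
      (fun e => contDiff_infty.1 (contDiff_resolventQuad hδ hu.contDiff hu.posSemidef e) 2)
      hbdd hL hε

end IsConvexSolution

end Rigidity

/-- Lemma 5.6 (Liouville theorem): let `b ≥ 0` and suppose `u : ℝⁿ → ℝ` is a smooth convex
function satisfying `Δu + b·det(D²u) = 1` on all of `ℝⁿ`. Then `u` is a quadratic polynomial;
equivalently, the Hessian `D²u` is a constant matrix. -/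
theorem statement16 (n : ℕ) (b : ℝ) (hb : 0 ≤ b)
    (u : EuclideanSpace ℝ (Fin n) → ℝ)
    (hsmooth : ContDiff ℝ (⊤ : ℕ∞) u)
    (hconv : ConvexOn ℝ Set.univ u)
    (heq : ∀ x, (Hess n u x).trace + b * (Hess n u x).det = 1) :
    ∀ x y, Hess n u x = Hess n u y := by
  have hu : IsConvexSolution b u :=
    ⟨hsmooth, posSemidef_Hess_of_convexOn hconv (contDiff_infty.1 hsmooth 2), heq⟩
  have hmem := hu.Hess_mem_solutionMatrices
  rcases lt_or_ge n 2 with hn | hn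
  · have : Subsingleton (Fin n) := Fin.subsingleton_iff_le_one.2 (Nat.le_of_lt_succ hn)
    exact fun x y => eq_of_mem_solutionMatrices_of_subsingleton hb (hmem x) (hmem y)
  · obtain ⟨δ, hδ, hL⟩ := exists_ellipticOp_resolventQuad_nonneg n hb
    obtain ⟨A, hA, hle⟩ := hu.exists_forall_resolventQuad_le hn hb hδ (hL u hu)
    have hconst : ∀ x, Hess n u x = A := fun x =>
      eq_of_resolvent_le hb hδ (hmem x) hA fun e => hle e x
    exact fun x y => (hconst x).trans (hconst y).symm
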